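/- arXiv:1410.6068 — 8 statements merged into one kernel-verified Lean document; each statement's English description precedes it below -/
import Mathlib

section
/- Let w : ℝ → [0,∞) be C¹ with w′ ≥ 0, and let φ : ℝ × ℝ² → ℝ be smooth and such that on every compact time interval the supports of φ(t,·) are contained in a fixed compact subset of ℝ². Set f = −∂_t²φ + Δφ, and for x ≠ 0 write ∂_rφ = (x/|x|)·∇_xφ, ∂_sφ = (1/2)(∂_tφ + ∂_rφ), and (∂_θφ)/r = |x|^{−1}(x₁∂_{x₂}φ − x₂∂_{x₁}φ). Then for every t, (1/2) d/dt ∫_{ℝ²} w(|x|−t) ( (∂_tφ)² + |∇_xφ|² )(t,x) dx + (1/2) ∫_{ℝ²} w′(|x|−t) ( (∂_sφ)² + ((∂_θφ)/r)² )(t,x) dx ≤ ∫_{ℝ²} w(|x|−t) | f ∂_tφ |(t,x) dx. -/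
open MeasureTheory

noncomputable section

/-- partial derivative in the time variable of a function `ℝ → ℝ → ℝ → ℝ` ((t,x₁,x₂) curried). -/
def pdt (φ : ℝ → ℝ → ℝ → ℝ) : ℝ → ℝ → ℝ → ℝ :=
  fun t x y => deriv (fun s => φ s x y) t

/-- partial derivative in the first space variable. -/
def pdx (φ : ℝ → ℝ → ℝ → ℝ) : ℝ → ℝ → ℝ → ℝ :=
  fun t x y => deriv (fun s => φ t s y) x

/-- partial derivative in the second space variable. -/
def pdy (φ : ℝ → ℝ → ℝ → ℝ) : ℝ → ℝ → ℝ → ℝ :=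
  fun t x y => deriv (fun s => φ t x s) y

/-- joint smoothness -/
def Sm (φ : ℝ → ℝ → ℝ → ℝ) : Prop :=
  ContDiff ℝ (⊤ : ℕ∞) (fun p : ℝ × ℝ × ℝ => φ p.1 p.2.1 p.2.2)

lemma Sm.dt {φ} (h : Sm φ) (t x y : ℝ) : HasDerivAt (fun s => φ s x y)
    (fderiv ℝ (fun p : ℝ × ℝ × ℝ => φ p.1 p.2.1 p.2.2) (t, x, y) (1, 0, 0)) t := by
  have h1 : HasDerivAt (fun s : ℝ => (s, x, y)) ((1 : ℝ), (0 : ℝ), (0 : ℝ)) t :=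
    (hasDerivAt_id t).prodMk (hasDerivAt_const t (x, y))
  exact ((ContDiff.differentiable h (by simp)) (t, x, y)).hasFDerivAt.comp_hasDerivAt t h1

lemma Sm.dx {φ} (h : Sm φ) (t x y : ℝ) : HasDerivAt (fun s => φ t s y)
    (fderiv ℝ (fun p : ℝ × ℝ × ℝ => φ p.1 p.2.1 p.2.2) (t, x, y) (0, 1, 0)) x := by
  have h1 : HasDerivAt (fun s : ℝ => (t, s, y)) ((0 : ℝ), (1 : ℝ), (0 : ℝ)) x :=
    (hasDerivAt_const x t).prodMk ((hasDerivAt_id x).prodMk (hasDerivAt_const x y))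
  exact ((ContDiff.differentiable h (by simp)) (t, x, y)).hasFDerivAt.comp_hasDerivAt x h1

lemma Sm.dy {φ} (h : Sm φ) (t x y : ℝ) : HasDerivAt (fun s => φ t x s)
    (fderiv ℝ (fun p : ℝ × ℝ × ℝ => φ p.1 p.2.1 p.2.2) (t, x, y) (0, 0, 1)) y := by
  have h1 : HasDerivAt (fun s : ℝ => (t, x, s)) ((0 : ℝ), (0 : ℝ), (1 : ℝ)) y :=
    (hasDerivAt_const y t).prodMk ((hasDerivAt_const y x).prodMk (hasDerivAt_id y))
  exact ((ContDiff.differentiable h (by simp)) (t, x, y)).hasFDerivAt.comp_hasDerivAt y h1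

lemma Sm.pdt_eq {φ} (h : Sm φ) : (fun p : ℝ × ℝ × ℝ => pdt φ p.1 p.2.1 p.2.2) =
    fun p => fderiv ℝ (fun p : ℝ × ℝ × ℝ => φ p.1 p.2.1 p.2.2) p (1, 0, 0) := by
  funext p; exact (h.dt p.1 p.2.1 p.2.2).deriv

lemma Sm.pdx_eq {φ} (h : Sm φ) : (fun p : ℝ × ℝ × ℝ => pdx φ p.1 p.2.1 p.2.2) =
    fun p => fderiv ℝ (fun p : ℝ × ℝ × ℝ => φ p.1 p.2.1 p.2.2) p (0, 1, 0) := by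
  funext p; exact (h.dx p.1 p.2.1 p.2.2).deriv

lemma Sm.pdy_eq {φ} (h : Sm φ) : (fun p : ℝ × ℝ × ℝ => pdy φ p.1 p.2.1 p.2.2) =
    fun p => fderiv ℝ (fun p : ℝ × ℝ × ℝ => φ p.1 p.2.1 p.2.2) p (0, 0, 1) := by
  funext p; exact (h.dy p.1 p.2.1 p.2.2).deriv

lemma Sm.fd {φ} (h : Sm φ) : ContDiff ℝ (⊤ : ℕ∞)
    (fderiv ℝ (fun p : ℝ × ℝ × ℝ => φ p.1 p.2.1 p.2.2)) :=
  ContDiff.fderiv_right (m := ((⊤ : ℕ∞) : WithTop ℕ∞)) h (by norm_cast)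

lemma Sm.pdt {φ} (h : Sm φ) : Sm (pdt φ) := by
  unfold Sm; rw [h.pdt_eq]; exact h.fd.clm_apply contDiff_const

lemma Sm.pdx {φ} (h : Sm φ) : Sm (pdx φ) := by
  unfold Sm; rw [h.pdx_eq]; exact h.fd.clm_apply contDiff_const

lemma Sm.pdy {φ} (h : Sm φ) : Sm (pdy φ) := by
  unfold Sm; rw [h.pdy_eq]; exact h.fd.clm_apply contDiff_const

lemma Sm.hdt {φ} (h : Sm φ) (t x y : ℝ) : HasDerivAt (fun s => φ s x y) (_root_.pdt φ t x y) t :=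
  (h.dt t x y).differentiableAt.hasDerivAt

lemma Sm.hdx {φ} (h : Sm φ) (t x y : ℝ) : HasDerivAt (fun s => φ t s y) (_root_.pdx φ t x y) x :=
  (h.dx t x y).differentiableAt.hasDerivAt

lemma Sm.hdy {φ} (h : Sm φ) (t x y : ℝ) : HasDerivAt (fun s => φ t x s) (_root_.pdy φ t x y) y :=
  (h.dy t x y).differentiableAt.hasDerivAt

lemma Sm.cont {φ} (h : Sm φ) : Continuous (fun p : ℝ × ℝ × ℝ => φ p.1 p.2.1 p.2.2) :=
  ContDiff.continuous h

lemma Sm.cont2 {φ} (h : Sm φ) (t : ℝ) : Continuous (fun p : ℝ × ℝ => φ t p.1 p.2) :=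
  h.cont.comp (Continuous.prodMk_right t)

lemma snd_fd {φ} (h : Sm φ) (p a b : ℝ × ℝ × ℝ) :
    fderiv ℝ (fun p => fderiv ℝ (fun p : ℝ × ℝ × ℝ => φ p.1 p.2.1 p.2.2) p a) p b =
    fderiv ℝ (fun p => fderiv ℝ (fun p : ℝ × ℝ × ℝ => φ p.1 p.2.1 p.2.2) p b) p a := by
  have hs : IsSymmSndFDerivAt ℝ (fun p : ℝ × ℝ × ℝ => φ p.1 p.2.1 p.2.2) p :=
    ContDiffAt.isSymmSndFDerivAt (n := ((⊤ : ℕ∞) : WithTop ℕ∞)) (ContDiff.contDiffAt h)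
      (by simp only [minSmoothness_of_isRCLikeNormedField]; exact WithTop.coe_le_coe.2 (le_top (a := (2 : ℕ∞))))
  have hd := (h.fd.differentiable (by simp)) p
  rw [fderiv_clm_apply hd (by fun_prop), fderiv_clm_apply hd (by fun_prop)]
  simpa using hs b a

lemma comm_tx {φ} (h : Sm φ) (t x y : ℝ) : pdt (pdx φ) t x y = pdx (pdt φ) t x y := by
  have h1 := (h.pdx.dt t x y).deriv
  have h2 := (h.pdt.dx t x y).deriv
  rw [h.pdx_eq] at h1
  rw [h.pdt_eq, snd_fd h] at h2
  exact h1.trans h2.symm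

lemma comm_ty {φ} (h : Sm φ) (t x y : ℝ) : pdt (pdy φ) t x y = pdy (pdt φ) t x y := by
  have h1 := (h.pdy.dt t x y).deriv
  have h2 := (h.pdt.dy t x y).deriv
  rw [h.pdy_eq] at h1
  rw [h.pdt_eq, snd_fd h] at h2
  exact h1.trans h2.symm

/-- vanishing for large radius on an open time interval -/
def Van (a b R : ℝ) (φ : ℝ → ℝ → ℝ → ℝ) : Prop :=
  ∀ t ∈ Set.Ioo a b, ∀ x y : ℝ, R < Real.sqrt (x^2 + y^2) → φ t x y = 0

lemma Van.pdt {a b R φ} (h : Van a b R φ) : Van a b R (pdt φ) := by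
  intro t ht x y hr
  have : (fun s => φ s x y) =ᶠ[nhds t] fun _ => 0 := by
    filter_upwards [isOpen_Ioo.mem_nhds ht] with s hs using h s hs x y hr
  simpa [_root_.pdt] using this.deriv_eq

lemma Van.pdx {a b R φ} (h : Van a b R φ) : Van a b R (pdx φ) := by
  intro t ht x y hr
  have hc : Continuous fun s : ℝ => Real.sqrt (s^2 + y^2) := by fun_prop
  have : (fun s => φ t s y) =ᶠ[nhds x] fun _ => 0 := by
    filter_upwards [hc.continuousAt.eventually (lt_mem_nhds hr)] with s hs using h t ht s y hs
  simpa [_root_.pdx] using this.deriv_eq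

lemma Van.pdy {a b R φ} (h : Van a b R φ) : Van a b R (pdy φ) := by
  intro t ht x y hr
  have hc : Continuous fun s : ℝ => Real.sqrt (x^2 + s^2) := by fun_prop
  have : (fun s => φ t x s) =ᶠ[nhds y] fun _ => 0 := by
    filter_upwards [hc.continuousAt.eventually (lt_mem_nhds hr)] with s hs using h t ht x s hs
  simpa [_root_.pdy] using this.deriv_eq

lemma mem_box {R : ℝ} {p : ℝ × ℝ} (hp : Real.sqrt (p.1^2 + p.2^2) ≤ R) :
    p ∈ Set.Icc (-R) R ×ˢ Set.Icc (-R) R := by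
  have h1 : |p.1| ≤ Real.sqrt (p.1^2 + p.2^2) := Real.abs_le_sqrt (by nlinarith [sq_nonneg p.2])
  have h2 : |p.2| ≤ Real.sqrt (p.1^2 + p.2^2) := Real.abs_le_sqrt (by nlinarith [sq_nonneg p.1])
  exact ⟨abs_le.1 (h1.trans hp), abs_le.1 (h2.trans hp)⟩

lemma box_compact (R : ℝ) : IsCompact (Set.Icc (-R) R ×ˢ Set.Icc (-R) R) :=
  isCompact_Icc.prod isCompact_Icc

lemma int_cs {g : ℝ × ℝ → ℝ} (hg : Continuous g) (R : ℝ)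
    (h : ∀ p : ℝ × ℝ, R < Real.sqrt (p.1^2 + p.2^2) → g p = 0) : Integrable g := by
  apply hg.integrable_of_hasCompactSupport
  apply HasCompactSupport.intro (box_compact R)
  intro p hp
  exact h p (lt_of_not_ge fun h' => hp (mem_box h'))

lemma deriv_int {G G' : ℝ → ℝ × ℝ → ℝ} (t R : ℝ)
    (hG : ∀ τ, Continuous (G τ))
    (hG' : Continuous (fun p : ℝ × ℝ × ℝ => G' p.1 p.2))
    (hd : ∀ τ p, HasDerivAt (fun s => G s p) (G' τ p) τ)
    (h0 : ∀ τ ∈ Set.Ioo (t-1) (t+1), ∀ p : ℝ × ℝ, R < Real.sqrt (p.1^2 + p.2^2) → G τ p = 0)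
    (h0' : ∀ τ ∈ Set.Ioo (t-1) (t+1), ∀ p : ℝ × ℝ, R < Real.sqrt (p.1^2 + p.2^2) → G' τ p = 0) :
    HasDerivAt (fun τ => ∫ p, G τ p) (∫ p, G' t p) t := by
  have ht : t ∈ Set.Ioo (t-1) (t+1) := by constructor <;> linarith
  obtain ⟨C, hC⟩ := ((isCompact_Icc (a := t-1) (b := t+1)).prod
    (box_compact R)).exists_bound_of_continuousOn hG'.continuousOn
  have hK := box_compact R
  refine (hasDerivAt_integral_of_dominated_loc_of_deriv_le
    (bound := (Set.Icc (-R) R ×ˢ Set.Icc (-R) R).indicator fun _ => C)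
    (isOpen_Ioo.mem_nhds ht) ?_ ?_ ?_ ?_ ?_ ?_).2
  · exact Filter.Eventually.of_forall fun τ => (hG τ).aestronglyMeasurable
  · exact int_cs (hG t) R (h0 t ht)
  · exact (hG'.comp (Continuous.prodMk_right t)).aestronglyMeasurable
  · refine Filter.Eventually.of_forall fun p τ hτ => ?_
    by_cases hp : p ∈ Set.Icc (-R) R ×ˢ Set.Icc (-R) R
    · rw [Set.indicator_of_mem hp]
      exact hC (τ, p) ⟨⟨hτ.1.le, hτ.2.le⟩, hp⟩
    · rw [Set.indicator_of_notMem hp, h0' τ hτ p (lt_of_not_ge fun h' => hp (mem_box h'))]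
      simp
  · exact (integrable_indicator_iff hK.measurableSet).2
      (integrableOn_const hK.measure_lt_top.ne)
  · exact Filter.Eventually.of_forall fun p τ _ => hd τ p

lemma int_dx {F F' : ℝ × ℝ → ℝ} (hF : Integrable F) (hF' : Integrable F')
    (hd : ∀ x y, y ≠ 0 → HasDerivAt (fun s => F (s, y)) (F' (x, y)) x) : ∫ p, F' p = 0 := by
  rw [Measure.volume_eq_prod] at *
  rw [integral_prod_symm _ hF']
  apply integral_eq_zero_of_ae
  have hne : ∀ᵐ y : ℝ, y ≠ 0 := by simp [ae_iff]
  filter_upwards [hF.prod_left_ae, hF'.prod_left_ae, hne] with y h1 h2 h3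
  exact integral_eq_zero_of_hasDerivAt_of_integrable (fun x => hd x y h3) h2 h1

lemma int_dy {F F' : ℝ × ℝ → ℝ} (hF : Integrable F) (hF' : Integrable F')
    (hd : ∀ x y, x ≠ 0 → HasDerivAt (fun s => F (x, s)) (F' (x, y)) y) : ∫ p, F' p = 0 := by
  rw [Measure.volume_eq_prod] at *
  rw [integral_prod _ hF']
  apply integral_eq_zero_of_ae
  have hne : ∀ᵐ y : ℝ, y ≠ 0 := by simp [ae_iff]
  filter_upwards [hF.prod_right_ae, hF'.prod_right_ae, hne] with y h1 h2 h3
  exact integral_eq_zero_of_hasDerivAt_of_integrable (fun x => hd y x h3) h2 h1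

lemma int_bdd {g c : ℝ × ℝ → ℝ} (hg : Integrable g) (hc : Measurable c) (C : ℝ)
    (hb : ∀ p, |c p| ≤ C) : Integrable fun p => c p * g p :=
  hg.bdd_mul hc.aestronglyMeasurable (Filter.Eventually.of_forall hb)

lemma hd_r {x y : ℝ} (h : x^2 + y^2 ≠ 0) :
    HasDerivAt (fun s : ℝ => Real.sqrt (s^2 + y^2)) (x / Real.sqrt (x^2 + y^2)) x := by
  have h1 : HasDerivAt (fun s : ℝ => s^2 + y^2) (2 * x) x := by
    simpa using (hasDerivAt_pow 2 x).add_const (y^2)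
  convert h1.sqrt h using 1
  field_simp

lemma cs_alt (x y : ℝ) :
    ((x / Real.sqrt (x^2 + y^2))^2 + (y / Real.sqrt (x^2 + y^2))^2 = 1) ∨
    (x / Real.sqrt (x^2 + y^2) = 0 ∧ y / Real.sqrt (x^2 + y^2) = 0) := by
  by_cases h : x^2 + y^2 = 0
  · right; simp [h]
  · left
    rw [div_pow, div_pow, Real.sq_sqrt (by positivity), ← add_div, div_self h]

lemma c_le (x y : ℝ) : |x / Real.sqrt (x^2 + y^2)| ≤ 1 := by
  rcases cs_alt x y with h | h
  · exact abs_le_one_iff_mul_self_le_one.2 (by nlinarith [sq_nonneg (y / Real.sqrt (x^2 + y^2))])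
  · simp [h.1]

lemma s_le (x y : ℝ) : |y / Real.sqrt (x^2 + y^2)| ≤ 1 := by
  have := c_le y x
  rwa [add_comm (y^2)] at this

lemma alg (W W' c s a b d f tt xx yy tx ty : ℝ) (hW : 0 ≤ W) (hW' : 0 ≤ W')
    (hcs : c^2 + s^2 = 1 ∨ (c = 0 ∧ s = 0)) (hf : f = -tt + xx + yy) :
    (1/2) * (-W' * (a^2 + b^2 + d^2) + W * (2 * a * tt + 2 * b * tx + 2 * d * ty))
      + (1/2) * (W' * (((1/2) * (a + (c * b + s * d)))^2 + (c * d - s * b)^2))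
    ≤ W * |f * a| + (c * (W' * (b * a)) + W * (xx * a + b * tx))
      + (s * (W' * (d * a)) + W * (yy * a + d * ty)) := by
  have h1 : -(f * a) ≤ |f * a| := neg_le_abs _
  have h2 : W * (-(f * a)) ≤ W * |f * a| := mul_le_mul_of_nonneg_left h1 hW
  have h3 : ((1/2) * (a + (c * b + s * d)))^2 + (c * d - s * b)^2 ≤
      (a^2 + b^2 + d^2) + 2 * a * (c * b + s * d) := by
    rcases hcs with h | ⟨rfl, rfl⟩
    · have : a^2 + b^2 + d^2 + 2 * a * (c * b + s * d) =
          (a + (c * b + s * d))^2 + (c * d - s * b)^2 := by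
        linear_combination (-(b^2 + d^2)) * h
      rw [this]; nlinarith [sq_nonneg (a + (c * b + s * d))]
    · nlinarith [sq_nonneg a, sq_nonneg b, sq_nonneg d]
  have h4 := mul_le_mul_of_nonneg_left h3 hW'
  subst hf
  nlinarith

/-- Weighted energy estimate for the flat wave operator `□ = −∂_t² + Δ` on `ℝ^{2+1}`
(Proposition `energy` of the paper), with weight function `w` of the null coordinate
`q = |x| − t`. -/
theorem stmt1 (w : ℝ → ℝ) (hw : ContDiff ℝ 1 w) (hw0 : ∀ q : ℝ, 0 ≤ w q)
    (hw' : ∀ q : ℝ, 0 ≤ deriv w q)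
    (φ : ℝ → ℝ → ℝ → ℝ)
    (hφ : ContDiff ℝ (⊤ : ℕ∞) (fun p : ℝ × ℝ × ℝ => φ p.1 p.2.1 p.2.2))
    -- on every compact time interval the supports of φ(t,·) lie in a fixed compact set
    (hsupp : ∀ a b : ℝ, ∃ R : ℝ, ∀ t ∈ Set.Icc a b, ∀ x₁ x₂ : ℝ,
        R < Real.sqrt (x₁^2 + x₂^2) → φ t x₁ x₂ = 0) :
    ∀ t : ℝ,
      (1/2) * deriv (fun τ => ∫ x : ℝ × ℝ,
          w (Real.sqrt (x.1^2 + x.2^2) - τ) *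
            ((pdt φ τ x.1 x.2)^2 + (pdx φ τ x.1 x.2)^2 + (pdy φ τ x.1 x.2)^2)) t
      + (1/2) * ∫ x : ℝ × ℝ,
          deriv w (Real.sqrt (x.1^2 + x.2^2) - t) *
            (((1/2) * (pdt φ t x.1 x.2
                + (x.1 * pdx φ t x.1 x.2 + x.2 * pdy φ t x.1 x.2)
                    / Real.sqrt (x.1^2 + x.2^2)))^2
             + ((x.1 * pdy φ t x.1 x.2 - x.2 * pdx φ t x.1 x.2)
                    / Real.sqrt (x.1^2 + x.2^2))^2)
      ≤ ∫ x : ℝ × ℝ,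
          w (Real.sqrt (x.1^2 + x.2^2) - t) *
            |(- pdt (pdt φ) t x.1 x.2 + pdx (pdx φ) t x.1 x.2 + pdy (pdy φ) t x.1 x.2)
              * pdt φ t x.1 x.2| := by
  intro t
  have hS : Sm φ := hφ
  obtain ⟨R, hR⟩ := hsupp (t-1) (t+1)
  have hV : Van (t-1) (t+1) R φ := fun τ hτ => hR τ ⟨hτ.1.le, hτ.2.le⟩
  have ht : t ∈ Set.Ioo (t-1) (t+1) := by constructor <;> linarith
  have hwc : Continuous w := hw.continuous
  have hwc' : Continuous (deriv w) := hw.continuous_deriv le_rfl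
  have hwd : ∀ q, HasDerivAt w (deriv w q) q := fun q =>
    (hw.differentiable (by simp) q).hasDerivAt
  have hW : Continuous fun p : ℝ × ℝ => w (Real.sqrt (p.1^2 + p.2^2) - t) := by fun_prop
  have hW' : Continuous fun p : ℝ × ℝ => deriv w (Real.sqrt (p.1^2 + p.2^2) - t) := by fun_prop
  have ca := hS.pdt.cont2 t
  have cb := hS.pdx.cont2 t
  have cd := hS.pdy.cont2 t
  have ctt := hS.pdt.pdt.cont2 t
  have cxx := hS.pdx.pdx.cont2 t
  have cyy := hS.pdy.pdy.cont2 t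
  have ctx := hS.pdt.pdx.cont2 t
  have cty := hS.pdt.pdy.cont2 t
  have va := fun p : ℝ × ℝ => hV.pdt t ht p.1 p.2
  have vb := fun p : ℝ × ℝ => hV.pdx t ht p.1 p.2
  have vd := fun p : ℝ × ℝ => hV.pdy t ht p.1 p.2
  have mc : Measurable fun p : ℝ × ℝ => p.1 / Real.sqrt (p.1^2 + p.2^2) := by fun_prop
  have ms : Measurable fun p : ℝ × ℝ => p.2 / Real.sqrt (p.1^2 + p.2^2) := by fun_prop
  have bc : ∀ p : ℝ × ℝ, |p.1 / Real.sqrt (p.1^2 + p.2^2)| ≤ 1 := fun p => c_le _ _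
  have bs : ∀ p : ℝ × ℝ, |p.2 / Real.sqrt (p.1^2 + p.2^2)| ≤ 1 := fun p => s_le _ _
  let G' : ℝ → ℝ × ℝ → ℝ := fun τ p =>
    -deriv w (Real.sqrt (p.1^2 + p.2^2) - τ) *
      ((pdt φ τ p.1 p.2)^2 + (pdx φ τ p.1 p.2)^2 + (pdy φ τ p.1 p.2)^2)
    + w (Real.sqrt (p.1^2 + p.2^2) - τ) *
      (2 * pdt φ τ p.1 p.2 * pdt (pdt φ) τ p.1 p.2 + 2 * pdx φ τ p.1 p.2 * pdx (pdt φ) τ p.1 p.2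
        + 2 * pdy φ τ p.1 p.2 * pdy (pdt φ) τ p.1 p.2)
  have hG'c : Continuous (fun p : ℝ × ℝ × ℝ => G' p.1 p.2) := by
    have := hS.pdt.cont
    have := hS.pdx.cont
    have := hS.pdy.cont
    have := hS.pdt.pdt.cont
    have := hS.pdt.pdx.cont
    have := hS.pdt.pdy.cont
    simp only [G']
    fun_prop
  have hG'v : ∀ τ ∈ Set.Ioo (t-1) (t+1), ∀ p : ℝ × ℝ,
      R < Real.sqrt (p.1^2 + p.2^2) → G' τ p = 0 := by
    intro τ hτ p hp
    simp [G', hV.pdt τ hτ p.1 p.2 hp, hV.pdx τ hτ p.1 p.2 hp, hV.pdy τ hτ p.1 p.2 hp]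
  have hE := deriv_int (G := fun τ x => w (Real.sqrt (x.1^2 + x.2^2) - τ) *
            ((pdt φ τ x.1 x.2)^2 + (pdx φ τ x.1 x.2)^2 + (pdy φ τ x.1 x.2)^2)) (G' := G') t R
    (fun τ => by
      have := hS.pdt.cont2 τ
      have := hS.pdx.cont2 τ
      have := hS.pdy.cont2 τ
      fun_prop) hG'c
    (fun τ p => by
      have h1 : HasDerivAt (fun s => w (Real.sqrt (p.1^2 + p.2^2) - s))
          (-deriv w (Real.sqrt (p.1^2 + p.2^2) - τ)) τ := by
        exact ((hwd (Real.sqrt (p.1^2 + p.2^2) - τ)).comp τ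
          ((hasDerivAt_id τ).const_sub (Real.sqrt (p.1^2 + p.2^2)))).congr_deriv (by ring)
      have h2 := (((hS.pdt.hdt τ p.1 p.2).pow 2).add ((hS.pdx.hdt τ p.1 p.2).pow 2)).add
        ((hS.pdy.hdt τ p.1 p.2).pow 2)
      rw [comm_tx hS, comm_ty hS] at h2
      refine (h1.mul h2).congr_deriv ?_
      simp [G'])
    (fun τ hτ p hp => by
      simp [hV.pdt τ hτ p.1 p.2 hp, hV.pdx τ hτ p.1 p.2 hp, hV.pdy τ hτ p.1 p.2 hp]) hG'v
  rw [hE.deriv]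
  have iG : Integrable (G' t) := int_cs (hG'c.comp (Continuous.prodMk_right t)) R (hG'v t ht)
  let A : ℝ × ℝ → ℝ := fun x => deriv w (Real.sqrt (x.1^2 + x.2^2) - t) *
            (((1/2) * (pdt φ t x.1 x.2
                + (x.1 * pdx φ t x.1 x.2 + x.2 * pdy φ t x.1 x.2)
                    / Real.sqrt (x.1^2 + x.2^2)))^2
             + ((x.1 * pdy φ t x.1 x.2 - x.2 * pdx φ t x.1 x.2)
                    / Real.sqrt (x.1^2 + x.2^2))^2)
  have hA : ∀ p : ℝ × ℝ, A p = deriv w (Real.sqrt (p.1^2 + p.2^2) - t) *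
      (((1/2) * (pdt φ t p.1 p.2 + (p.1 / Real.sqrt (p.1^2 + p.2^2) * pdx φ t p.1 p.2
        + p.2 / Real.sqrt (p.1^2 + p.2^2) * pdy φ t p.1 p.2)))^2
        + (p.1 / Real.sqrt (p.1^2 + p.2^2) * pdy φ t p.1 p.2
          - p.2 / Real.sqrt (p.1^2 + p.2^2) * pdx φ t p.1 p.2)^2) := by
    intro p; simp only [A]; ring
  have iA : Integrable A := by
    have iE : Integrable fun p : ℝ × ℝ => 3 * (deriv w (Real.sqrt (p.1^2 + p.2^2) - t) *
        ((pdt φ t p.1 p.2)^2 + (pdx φ t p.1 p.2)^2 + (pdy φ t p.1 p.2)^2)) :=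
      int_cs (by fun_prop) R (fun p hp => by simp [va p hp, vb p hp, vd p hp])
    refine iE.mono' ?_ ?_
    · apply Measurable.aestronglyMeasurable
      have := ca.measurable
      have := cb.measurable
      have := cd.measurable
      have := hW'.measurable
      simp only [A]
      fun_prop
    · refine Filter.Eventually.of_forall fun p => ?_
      have hn : 0 ≤ A p := mul_nonneg (hw' _) (by positivity)
      rw [Real.norm_of_nonneg hn, hA, mul_left_comm]
      refine mul_le_mul_of_nonneg_left ?_ (hw' _)
      have hcs := cs_alt p.1 p.2
      generalize p.1 / Real.sqrt (p.1^2 + p.2^2) = c at *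
      generalize p.2 / Real.sqrt (p.1^2 + p.2^2) = s at *
      generalize pdt φ t p.1 p.2 = a
      generalize pdx φ t p.1 p.2 = b
      generalize pdy φ t p.1 p.2 = d
      rcases hcs with h | ⟨rfl, rfl⟩
      · have h5 : (c * b + s * d)^2 + (c * d - s * b)^2 = b^2 + d^2 := by
          linear_combination (b^2 + d^2) * h
        nlinarith [sq_nonneg (a - (c * b + s * d)), sq_nonneg a, sq_nonneg b, sq_nonneg d,
          sq_nonneg (c * d - s * b), sq_nonneg (c * b + s * d)]
      · nlinarith [sq_nonneg a, sq_nonneg b, sq_nonneg d]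
  let B : ℝ × ℝ → ℝ := fun x => w (Real.sqrt (x.1^2 + x.2^2) - t) *
            |(- pdt (pdt φ) t x.1 x.2 + pdx (pdx φ) t x.1 x.2 + pdy (pdy φ) t x.1 x.2)
              * pdt φ t x.1 x.2|
  have iB : Integrable B := int_cs (by simp only [B]; fun_prop) R
    (fun p hp => by simp [B, va p hp])
  let P' : ℝ × ℝ → ℝ := fun p => p.1 / Real.sqrt (p.1^2 + p.2^2) *
      (deriv w (Real.sqrt (p.1^2 + p.2^2) - t) * (pdx φ t p.1 p.2 * pdt φ t p.1 p.2))
      + w (Real.sqrt (p.1^2 + p.2^2) - t) * (pdx (pdx φ) t p.1 p.2 * pdt φ t p.1 p.2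
        + pdx φ t p.1 p.2 * pdx (pdt φ) t p.1 p.2)
  let Q' : ℝ × ℝ → ℝ := fun p => p.2 / Real.sqrt (p.1^2 + p.2^2) *
      (deriv w (Real.sqrt (p.1^2 + p.2^2) - t) * (pdy φ t p.1 p.2 * pdt φ t p.1 p.2))
      + w (Real.sqrt (p.1^2 + p.2^2) - t) * (pdy (pdy φ) t p.1 p.2 * pdt φ t p.1 p.2
        + pdy φ t p.1 p.2 * pdy (pdt φ) t p.1 p.2)
  have iP' : Integrable P' := by
    refine (int_bdd (int_cs (by fun_prop) R ?_) mc 1 bc).add (int_cs (by fun_prop) R ?_)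
    · intro p hp; simp [va p hp]
    · intro p hp; simp [va p hp, vb p hp]
  have iQ' : Integrable Q' := by
    refine (int_bdd (int_cs (by fun_prop) R ?_) ms 1 bs).add (int_cs (by fun_prop) R ?_)
    · intro p hp; simp [va p hp]
    · intro p hp; simp [va p hp, vd p hp]
  have zP : ∫ p, P' p = 0 := by
    refine int_dx (F := fun p => w (Real.sqrt (p.1^2 + p.2^2) - t) *
      (pdx φ t p.1 p.2 * pdt φ t p.1 p.2))
      (int_cs (by fun_prop) R (fun p hp => by simp [va p hp])) iP' ?_
    intro x y hy
    have h1 := (hwd (Real.sqrt (x^2 + y^2) - t)).comp x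
      ((hd_r (x := x) (y := y) (by positivity)).sub_const t)
    have h2 := (hS.pdx.hdx t x y).mul (hS.pdt.hdx t x y)
    refine (h1.mul h2).congr_deriv ?_
    simp only [P', Function.comp, Pi.mul_apply]
    ring
  have zQ : ∫ p, Q' p = 0 := by
    refine int_dy (F := fun p => w (Real.sqrt (p.1^2 + p.2^2) - t) *
      (pdy φ t p.1 p.2 * pdt φ t p.1 p.2))
      (int_cs (by fun_prop) R (fun p hp => by simp [va p hp])) iQ' ?_
    intro x y hy
    have h0 := hd_r (x := y) (y := x) (by positivity)
    simp only [add_comm _ (x^2)] at h0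
    have h1 := (hwd (Real.sqrt (x^2 + y^2) - t)).comp y (h0.sub_const t)
    have h2 := (hS.pdy.hdy t x y).mul (hS.pdt.hdy t x y)
    refine (h1.mul h2).congr_deriv ?_
    simp only [Q', Function.comp, Pi.mul_apply]
    ring
  change (1/2) * (∫ p, G' t p) + (1/2) * (∫ p, A p) ≤ ∫ p, B p
  have e1 : (1/2) * (∫ p, G' t p) + (1/2) * (∫ p, A p)
      = ∫ p, ((1/2) * G' t p + (1/2) * A p) := by
    rw [integral_add (iG.const_mul _) (iA.const_mul _), integral_const_mul, integral_const_mul]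
  have e2 : ∫ p, (B p + P' p + Q' p) = ∫ p, B p := by
    have e3 : ∫ p, (B p + P' p + Q' p) = (∫ p, (B p + P' p)) + ∫ p, Q' p :=
      integral_add (iB.add iP') iQ'
    rw [e3, integral_add iB iP', zP, zQ, add_zero, add_zero]
  rw [e1, ← e2]
  refine integral_mono ((iG.const_mul _).add (iA.const_mul _)) ((iB.add iP').add iQ') ?_
  intro p
  simp only [hA]
  exact alg _ _ _ _ _ _ _ _ _ _ _ _ _ (hw0 _) (hw' _) (cs_alt p.1 p.2) rfl
end
end

section
/- Let α < 1 and β > 1, and define v : ℝ → (0,∞) by v(q) = (1+|q|)^α for q < 0 and v(q) = (1+|q|)^β for q ≥ 0. Then there is a constant C = C(α,β) such that for every t ≥ 0 and every compactly supported C¹ function f : ℝ² → ℝ: ∫_{ℝ²} v(|x|−t) (1+||x|−t|)^{−2} f(x)² dx ≤ C ∫_{ℝ²} v(|x|−t) ( (x/|x|)·∇f(x) )² dx. -/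
open MeasureTheory

noncomputable section

/-- the weight `v(q) = (1+|q|)^α` for `q < 0` and `(1+|q|)^β` for `q ≥ 0`. -/
def Hv (α β : ℝ) : ℝ → ℝ :=
  fun q => if q < 0 then (1 + |q|) ^ α else (1 + |q|) ^ β

def Hg (α β : ℝ) : ℝ → ℝ :=
  fun q => if q < 0 then (1 + |q|) ^ (α - 1) else (1 + |q|) ^ (β - 1)

lemma ite_cont (a b : ℝ) :
    Continuous (fun q : ℝ => if q < 0 then (1 + |q|) ^ a else (1 + |q|) ^ b) := by
  have h : ∀ a : ℝ, Continuous (fun q : ℝ => (1 + |q|) ^ a) := by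
    intro a
    refine Continuous.rpow_const (by fun_prop) ?_
    intro q
    left
    positivity
  apply Continuous.if
  · intro q hq
    have : q = 0 := by
      have h2 : {a : ℝ | a < 0} = Set.Iio 0 := rfl
      rw [h2, frontier_Iio] at hq
      simpa using hq
    subst this
    simp
  · exact h a
  · exact h b

lemma Hv_pos (α β q : ℝ) : 0 < Hv α β q := by
  unfold Hv
  split_ifs <;> positivity

lemma Hg_pos (α β q : ℝ) : 0 < Hg α β q := by
  unfold Hg
  split_ifs <;> positivity

lemma Hg_sq (α β q : ℝ) :
    Hg α β q ^ 2 = Hv α β q * (Hv α β q * (1 + |q|) ^ (-(2:ℝ))) := by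
  have hp : 0 < 1 + |q| := by positivity
  unfold Hv Hg
  split_ifs
  all_goals
    rw [← Real.rpow_add hp, ← Real.rpow_add hp, ← Real.rpow_natCast, ← Real.rpow_mul hp.le]
    congr 1
    push_cast
    ring

lemma Hg_deriv (α β c q : ℝ) (h1 : c ≤ 1 - α) (h2 : c ≤ β - 1) :
    ∃ g', HasDerivWithinAt (Hg α β) g' (Set.Ioi q) q ∧
      c * (Hv α β q * (1 + |q|) ^ (-(2:ℝ))) ≤ g' := by
  have hp : 0 < 1 + |q| := by positivity
  by_cases hq : q < 0
  · have hp' : 0 < 1 - q := by linarith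
    refine ⟨(1 - α) * (1 - q) ^ (α - 2), ?_, ?_⟩
    · apply HasDerivAt.hasDerivWithinAt
      have hd : HasDerivAt (fun x : ℝ => (1 - x) ^ (α - 1))
          ((1 - α) * (1 - q) ^ (α - 2)) q := by
        have := ((hasDerivAt_id' q).const_sub 1).rpow_const (p := α - 1) (Or.inl (by simpa using hp'.ne'))
        convert this using 1
        rw [show α - 1 - 1 = α - 2 by ring]
        ring
      refine hd.congr_of_eventuallyEq ?_
      filter_upwards [Iio_mem_nhds hq] with x hx
      have hx' : x < 0 := hx
      simp only [Hg, if_pos hx', abs_of_neg hx']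
      rfl
    · rw [Hv, if_pos hq, ← Real.rpow_add hp, abs_of_neg hq]
      rw [show 1 + -q = 1 - q by ring, show α + -2 = α - 2 by ring]
      gcongr
  · have hq' : 0 ≤ q := not_lt.mp hq
    have hp' : 0 < 1 + q := by linarith
    refine ⟨(β - 1) * (1 + q) ^ (β - 2), ?_, ?_⟩
    · have hd : HasDerivAt (fun x : ℝ => (1 + x) ^ (β - 1))
          ((β - 1) * (1 + q) ^ (β - 2)) q := by
        have := ((hasDerivAt_id' q).const_add 1).rpow_const (p := β - 1) (Or.inl (by simpa using hp'.ne'))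
        convert this using 1
        rw [show β - 1 - 1 = β - 2 by ring]
        ring
      refine hd.hasDerivWithinAt.congr ?_ ?_
      · intro x hx
        have hx' : 0 ≤ x := hq'.trans (le_of_lt hx)
        simp only [Hg, if_neg (not_lt.mpr hx'), abs_of_nonneg hx']
      · simp only [Hg, if_neg hq, abs_of_nonneg hq']
    · rw [Hv, if_neg hq, ← Real.rpow_add hp, abs_of_nonneg hq']
      rw [show β + -2 = β - 2 by ring]
      gcongr

lemma rpow2_cont : Continuous (fun q : ℝ => (1 + |q|) ^ (-(2:ℝ))) := by
  refine Continuous.rpow_const (by fun_prop) ?_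
  intro q
  left
  positivity

lemma hardy_1d (α β c t R : ℝ) (hc : 0 < c) (h1 : c ≤ 1 - α) (h2 : c ≤ β - 1) (hR : 0 ≤ R)
    (F F' : ℝ → ℝ) (hF : ∀ r, HasDerivAt F (F' r) r) (hF' : Continuous F') (hFR : F R = 0) :
    0 ≤ ∫ r in (0:ℝ)..R, (2 / c * (r * (Hv α β (r - t) * (F' r) ^ 2)) -
      c / 2 * (r * (Hv α β (r - t) * (1 + |r - t|) ^ (-(2:ℝ)) * (F r) ^ 2))) := by
  have hFc : Continuous F := continuous_iff_continuousAt.mpr fun r => (hF r).continuousAt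
  have hv : Continuous (Hv α β) := ite_cont α β
  have hg : Continuous (Hg α β) := ite_cont _ _
  have hr2 := rpow2_cont
  choose g' hg' hgl using fun q => Hg_deriv α β c q h1 h2
  have key := intervalIntegral.sub_le_integral_of_hasDeriv_right_of_le (a := 0) (b := R)
    (g := fun r => -(r * Hg α β (r - t) * (F r) ^ 2))
    (g' := fun r => -((1 * Hg α β (r - t) + r * g' (r - t)) * (F r) ^ 2
      + r * Hg α β (r - t) * (2 * F r * F' r)))
    (φ := fun r => (2 / c * (r * (Hv α β (r - t) * (F' r) ^ 2)) -
      c / 2 * (r * (Hv α β (r - t) * (1 + |r - t|) ^ (-(2:ℝ)) * (F r) ^ 2)))) hR ?_ ?_ ?_ ?_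
  · simpa [hFR] using key
  · fun_prop
  · intro r _
    have e1 : HasDerivWithinAt (fun x => Hg α β (x - t)) (g' (r - t)) (Set.Ioi r) r := by
      have := HasDerivWithinAt.comp (h := fun x => x - t) (h' := 1) (s := Set.Ioi r) r (hg' (r - t))
        ((hasDerivAt_id r).sub_const t).hasDerivWithinAt (by
          intro x hx
          simpa using hx)
      rw [mul_one] at this
      exact this
    have e2 : HasDerivWithinAt (fun x => (F x) ^ 2) (2 * F r * F' r) (Set.Ioi r) r := by
      have := ((hF r).pow 2).hasDerivWithinAt (s := Set.Ioi r)
      simp only [Nat.cast_ofNat, Nat.add_one_sub_one, pow_one] at this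
      exact this
    exact (((hasDerivWithinAt_id r (Set.Ioi r)).mul e1).mul e2).neg
  · apply Continuous.integrableOn_Icc
    have : Continuous fun r : ℝ => (1 + |r - t|) ^ (-(2:ℝ)) :=
      hr2.comp (continuous_id.sub continuous_const)
    fun_prop
  · intro r hr
    have hr0 : 0 < r := hr.1
    have hsq := Hg_sq α β (r - t)
    have hgp := Hg_pos α β (r - t)
    have hvp := Hv_pos α β (r - t)
    have hl := hgl (r - t)
    set G := Hg α β (r - t)
    set w := Hv α β (r - t)
    set a := w * (1 + |r - t|) ^ (-(2:ℝ))
    set d := g' (r - t)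
    have hq : 0 ≤ c / 2 * a * (F r) ^ 2 + 2 * G * F r * F' r + 2 / c * w * (F' r) ^ 2 := by
      have e : (G * F r + 2 / c * w * F' r) ^ 2 = (2 * w / c) *
          (c / 2 * a * (F r) ^ 2 + 2 * G * F r * F' r + 2 / c * w * (F' r) ^ 2) := by
        have : (G * F r + 2 / c * w * F' r) ^ 2 =
          G ^ 2 * (F r) ^ 2 + 4 / c * w * G * F r * F' r + 4 / c ^ 2 * w ^ 2 * (F' r) ^ 2 := by
          field_simp
          ring
        rw [this, hsq]
        field_simp
        ring
      have hpos : 0 < 2 * w / c := by positivity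
      have := sq_nonneg (G * F r + 2 / c * w * F' r)
      rw [e] at this
      exact nonneg_of_mul_nonneg_right this hpos
    have k1 := mul_nonneg hr0.le hq
    have k2 : 0 ≤ r * (F r) ^ 2 * (d - c * a) := mul_nonneg (by positivity) (by linarith)
    have k3 : 0 ≤ G * (F r) ^ 2 := by positivity
    nlinarith [k1, k2, k3]

/-- Weighted Hardy inequality (Proposition `hardy` / `prphard` of the paper);
the constant is uniform in `t`. -/
theorem stmt3 (α β : ℝ) (hα : α < 1) (hβ : 1 < β) :
    ∃ C : ℝ, 0 < C ∧
      ∀ t : ℝ, 0 ≤ t → ∀ f : ℝ × ℝ → ℝ, ContDiff ℝ 1 f → HasCompactSupport f →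
        ∫ x : ℝ × ℝ,
            Hv α β (Real.sqrt (x.1^2 + x.2^2) - t)
              * (1 + |Real.sqrt (x.1^2 + x.2^2) - t|) ^ (-(2:ℝ)) * (f x)^2
          ≤ C * ∫ x : ℝ × ℝ,
              Hv α β (Real.sqrt (x.1^2 + x.2^2) - t)
                * ((x.1 * fderiv ℝ f x (1, 0) + x.2 * fderiv ℝ f x (0, 1))
                  / Real.sqrt (x.1^2 + x.2^2))^2 := by
  obtain ⟨c, hc, h1, h2⟩ : ∃ c : ℝ, 0 < c ∧ c ≤ 1 - α ∧ c ≤ β - 1 :=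
    ⟨min (1 - α) (β - 1), lt_min (by linarith) (by linarith), min_le_left _ _, min_le_right _ _⟩
  refine ⟨4 / c ^ 2, by positivity, ?_⟩
  intro t _ f hf hfs
  rw [← integral_comp_polarCoord_symm, ← integral_comp_polarCoord_symm]
  set Q : ℝ × ℝ → ℝ × ℝ := fun p => (p.1 * Real.cos p.2, p.1 * Real.sin p.2) with hQ
  have hQc : Continuous Q := by fun_prop
  set L : ℝ × ℝ → ℝ := fun p =>
    p.1 * (Hv α β (p.1 - t) * (1 + |p.1 - t|) ^ (-(2:ℝ)) * (f (Q p)) ^ 2) with hL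
  set G : ℝ × ℝ → ℝ := fun p => fderiv ℝ f (Q p) (Real.cos p.2, Real.sin p.2) with hG
  set K : ℝ × ℝ → ℝ := fun p => p.1 * (Hv α β (p.1 - t) * (G p) ^ 2) with hK
  have hsqrt : ∀ p ∈ polarCoord.target,
      Real.sqrt ((p.1 * Real.cos p.2) ^ 2 + (p.1 * Real.sin p.2) ^ 2) = p.1 := by
    intro p hp
    have hp0 : 0 < p.1 := hp.1
    rw [show (p.1 * Real.cos p.2) ^ 2 + (p.1 * Real.sin p.2) ^ 2 = p.1 ^ 2 by
      have := Real.sin_sq_add_cos_sq p.2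
      linear_combination p.1 ^ 2 * this]
    exact Real.sqrt_sq hp0.le
  have hms : MeasurableSet polarCoord.target := polarCoord.open_target.measurableSet
  have eL := setIntegral_congr_fun (μ := volume) hms (g := L) (f := fun p : ℝ × ℝ => p.1 • (fun x : ℝ × ℝ =>
            Hv α β (Real.sqrt (x.1^2 + x.2^2) - t)
              * (1 + |Real.sqrt (x.1^2 + x.2^2) - t|) ^ (-(2:ℝ)) * (f x)^2) (polarCoord.symm p)) (by
    intro p hp
    simp only [polarCoord_symm_apply, smul_eq_mul, hL, hsqrt p hp, hQ])
  have eK := setIntegral_congr_fun (μ := volume) hms (g := K) (f := fun p : ℝ × ℝ => p.1 • (fun x : ℝ × ℝ =>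
              Hv α β (Real.sqrt (x.1^2 + x.2^2) - t)
                * ((x.1 * fderiv ℝ f x (1, 0) + x.2 * fderiv ℝ f x (0, 1))
                  / Real.sqrt (x.1^2 + x.2^2))^2) (polarCoord.symm p)) (by
    intro p hp
    have hp0 : 0 < p.1 := hp.1
    simp only [polarCoord_symm_apply, smul_eq_mul, hK, hsqrt p hp, hG, hQ]
    congr 3
    have : (Real.cos p.2, Real.sin p.2) =
      Real.cos p.2 • ((1, 0) : ℝ × ℝ) + Real.sin p.2 • ((0, 1) : ℝ × ℝ) := by simp
    rw [this, map_add, map_smul, map_smul]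
    simp only [smul_eq_mul]
    field_simp)
  refine (eL.trans_le ?_).trans_eq (congrArg _ eK.symm)
  -- support radius
  obtain ⟨R, hR0, hR⟩ : ∃ R : ℝ, 0 ≤ R ∧ ∀ p : ℝ × ℝ, R ≤ p.1 → Q p ∉ tsupport f := by
    obtain ⟨M, hM⟩ := hfs.isCompact.isBounded.exists_norm_le
    refine ⟨2 * |M| + 1, by positivity, ?_⟩
    intro p hp hmem
    have hn := hM _ hmem
    have a1 : |p.1 * Real.cos p.2| ≤ M := (norm_fst_le (Q p)).trans hn
    have a2 : |p.1 * Real.sin p.2| ≤ M := (norm_snd_le (Q p)).trans hn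
    have hM0 : 0 ≤ M := (abs_nonneg _).trans a1
    rw [abs_of_nonneg hM0] at hp
    have b1 := sq_le_sq' (abs_le.mp a1).1 (abs_le.mp a1).2
    have b2 := sq_le_sq' (abs_le.mp a2).1 (abs_le.mp a2).2
    have b3 : p.1 ^ 2 = (p.1 * Real.cos p.2) ^ 2 + (p.1 * Real.sin p.2) ^ 2 := by
      have := Real.sin_sq_add_cos_sq p.2
      linear_combination -p.1 ^ 2 * this
    nlinarith
  have hf0 : ∀ p : ℝ × ℝ, R ≤ p.1 → f (Q p) = 0 := fun p hp => image_eq_zero_of_notMem_tsupport (hR p hp)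
  have hG0 : ∀ p : ℝ × ℝ, R ≤ p.1 → G p = 0 := by
    intro p hp
    have : fderiv ℝ f (Q p) = 0 :=
      image_eq_zero_of_notMem_tsupport (fun h => hR p hp (tsupport_fderiv_subset ℝ h))
    simp [hG, this]
  have hv : Continuous (Hv α β) := ite_cont α β
  have hfc : Continuous f := hf.continuous
  have hfd : Continuous (fderiv ℝ f) := hf.continuous_fderiv (by norm_num)
  have hGc : Continuous G := by
    apply Continuous.clm_apply
    · exact hfd.comp hQc
    · fun_prop
  have hr2 : Continuous fun p : ℝ × ℝ => (1 + |p.1 - t|) ^ (-(2:ℝ)) :=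
    rpow2_cont.comp (continuous_fst.sub continuous_const)
  have hLc : Continuous L := by fun_prop
  have hKc : Continuous K := by fun_prop
  have hint : ∀ D : ℝ × ℝ → ℝ, Continuous D → (∀ p : ℝ × ℝ, R ≤ p.1 → D p = 0) →
      IntegrableOn D polarCoord.target := by
    intro D hD hD0
    have hcomp : IsCompact (Set.Icc (0:ℝ) R ×ˢ Set.Icc (-Real.pi) Real.pi) :=
      isCompact_Icc.prod isCompact_Icc
    refine (hD.continuousOn.integrableOn_compact hcomp).of_forall_sdiff_eq_zero hms ?_
    rintro p ⟨hp, hp'⟩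
    apply hD0
    by_contra hlt
    push Not at hlt
    exact hp' ⟨⟨le_of_lt hp.1, hlt.le⟩, ⟨le_of_lt hp.2.1, le_of_lt hp.2.2⟩⟩
  have iL := hint L hLc (fun p hp => by simp [hL, hf0 p hp])
  have iK := hint K hKc (fun p hp => by simp [hK, hG0 p hp])
  have main : 0 ≤ ∫ p in polarCoord.target, (2 / c * K p - c / 2 * L p) := by
    have iD : IntegrableOn (fun p => 2 / c * K p - c / 2 * L p) polarCoord.target :=
      (iK.const_mul _).sub (iL.const_mul _)
    rw [polarCoord_target, Measure.volume_eq_prod] at iD ⊢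
    rw [IntegrableOn, ← Measure.prod_restrict] at iD
    rw [← Measure.prod_restrict, integral_prod_symm _ iD]
    refine integral_nonneg fun θ => ?_
    have h1d := hardy_1d α β c t R hc h1 h2 hR0 (fun r => f (Q (r, θ))) (fun r => G (r, θ)) ?_
      (by fun_prop) (hf0 (R, θ) le_rfl)
    · rw [intervalIntegral.integral_of_le hR0] at h1d
      refine h1d.trans_eq ?_
      symm
      apply setIntegral_eq_of_subset_of_forall_sdiff_eq_zero measurableSet_Ioi
      · exact Set.Ioc_subset_Ioi_self
      · rintro r ⟨hr, hr'⟩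
        have : R ≤ r := by
          by_contra hlt
          push Not at hlt
          exact hr' ⟨hr, hlt.le⟩
        simp [hL, hK, hf0 (r, θ) this, hG0 (r, θ) this]
    · intro r
      have hd : HasDerivAt (fun r : ℝ => Q (r, θ)) (Real.cos θ, Real.sin θ) r := by
        have e1 := (hasDerivAt_id r).mul_const (Real.cos θ)
        have e2 := (hasDerivAt_id r).mul_const (Real.sin θ)
        simpa using e1.prodMk e2
      exact ((hf.differentiable (by norm_num)) (Q (r, θ))).hasFDerivAt.comp_hasDerivAt r hd
  rw [integral_sub (iK.const_mul _) (iL.const_mul _), integral_const_mul, integral_const_mul] at main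
  have e : 4 / c ^ 2 * ∫ p in polarCoord.target, K p =
      (2 / c) * (2 / c * ∫ p in polarCoord.target, K p) := by
    field_simp
    ring
  have e' : ∫ p in polarCoord.target, L p = (2 / c) * (c / 2 * ∫ p in polarCoord.target, L p) := by
    field_simp
  rw [e, e']
  have : 0 < 2 / c := by positivity
  exact mul_le_mul_of_nonneg_left (by linarith) this.le
end
end

section
/- Let b : [0,∞) → ℝ be continuous, let x ∈ ℝ² with r = |x| > 0, and let ρ > 0. Then ∫_{S¹} b(|x + ρω|) dω = 4 ∫_{|ρ−r|}^{ρ+r} λ b(λ) h(λ,ρ,r) dλ, where the left-hand integral is with respect to arclength measure on the unit circle S¹ ⊂ ℝ², and h(λ,ρ,r) = (λ² − (ρ−r)²)^{−1/2} ((ρ+r)² − λ²)^{−1/2}. Moreover, for |ρ−r| < λ < ρ+r one has the algebraic identity h(λ,ρ,r) = ((λ+r)² − ρ²)^{−1/2} (ρ² − (λ−r)²)^{−1/2}. -/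
open MeasureTheory

noncomputable section

/-- the kernel `h(λ,ρ,r) = (λ²−(ρ−r)²)^{−1/2} ((ρ+r)²−λ²)^{−1/2}`. -/
def hker (lam ρ r : ℝ) : ℝ :=
  (Real.sqrt (lam^2 - (ρ - r)^2))⁻¹ * (Real.sqrt ((ρ + r)^2 - lam^2))⁻¹

theorem hker_alt (lam ρ r : ℝ) (hr0 : 0 < r) (hρ : 0 < ρ) (h1 : |ρ - r| < lam)
    (h2 : lam < ρ + r) : hker lam ρ r =
          (Real.sqrt ((lam + r)^2 - ρ^2))⁻¹ * (Real.sqrt (ρ^2 - (lam - r)^2))⁻¹ := by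
  obtain ⟨h3, h4⟩ := abs_lt.1 h1
  unfold hker
  rw [← mul_inv, ← mul_inv, ← Real.sqrt_mul (by nlinarith), ← Real.sqrt_mul (by nlinarith)]
  congr 2
  ring

theorem change_var (b : ℝ → ℝ) (ρ r : ℝ) (hr0 : 0 < r) (hρ : 0 < ρ) :
    ∫ lam in (|ρ - r|)..(ρ + r), lam * b lam * hker lam ρ r
      = (1/2) * ∫ t in (0:ℝ)..Real.pi, b (Real.sqrt (r^2 + ρ^2 + 2 * r * ρ * Real.cos t)) := by
  have hrρ : 0 < r * ρ := mul_pos hr0 hρ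
  have hle : |ρ - r| ≤ ρ + r := abs_le.2 ⟨by linarith, by linarith⟩
  have hcos : ∀ t ∈ Set.Ioo 0 Real.pi, -1 < Real.cos t ∧ Real.cos t < 1 := by
    intro t ht
    have hs := Real.sin_pos_of_mem_Ioo ht
    have := Real.sin_sq_add_cos_sq t
    constructor <;> nlinarith
  have hpos : ∀ t ∈ Set.Ioo 0 Real.pi, 0 < r^2 + ρ^2 + 2 * r * ρ * Real.cos t := by
    intro t ht
    nlinarith [hcos t ht, sq_nonneg (r - ρ)]
  set f : ℝ → ℝ := fun t => Real.sqrt (r^2 + ρ^2 + 2 * r * ρ * Real.cos t) with hf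
  have himg : f '' Set.Ioo 0 Real.pi = Set.Ioo (|ρ - r|) (ρ + r) := by
    ext l
    constructor
    · rintro ⟨t, ht, rfl⟩
      obtain ⟨c1, c2⟩ := hcos t ht
      constructor
      · apply Real.lt_sqrt_of_sq_lt
        rw [sq_abs]
        nlinarith
      · rw [hf, Real.sqrt_lt' (by linarith)]
        nlinarith
    · rintro ⟨h1, h2⟩
      have hl0 : 0 < l := lt_of_le_of_lt (abs_nonneg _) h1
      obtain ⟨h3, h4⟩ := abs_lt.1 h1
      have hu : (l^2 - r^2 - ρ^2) / (2 * r * ρ) < 1 := by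
        rw [div_lt_one (by positivity)]; nlinarith
      have hd : -1 < (l^2 - r^2 - ρ^2) / (2 * r * ρ) := by
        rw [lt_div_iff₀ (by positivity)]; nlinarith
      refine ⟨Real.arccos ((l^2 - r^2 - ρ^2) / (2 * r * ρ)), ⟨Real.arccos_pos.2 hu, ?_⟩, ?_⟩
      · refine lt_of_le_of_ne (Real.arccos_le_pi _) ?_
        intro h
        rw [Real.arccos_eq_pi] at h
        linarith
      · simp only [hf]
        rw [Real.cos_arccos hd.le hu.le]
        have : r^2 + ρ^2 + 2 * r * ρ * ((l^2 - r^2 - ρ^2) / (2 * r * ρ)) = l^2 := by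
          field_simp; ring
        rw [this, Real.sqrt_sq hl0.le]
  have hinj : Set.InjOn f (Set.Ioo 0 Real.pi) := by
    intro s hs t ht hst
    have h := (Real.sqrt_inj (hpos s hs).le (hpos t ht).le).1 hst
    have h' : Real.cos s = Real.cos t := by
      have : 2 * (r * ρ) * (Real.cos s - Real.cos t) = 0 := by linarith
      rcases mul_eq_zero.1 this with h | h
      · linarith
      · linarith
    exact Real.injOn_cos (Set.Ioo_subset_Icc_self hs) (Set.Ioo_subset_Icc_self ht) h'
  have hder : ∀ t ∈ Set.Ioo 0 Real.pi,
      HasDerivWithinAt f (-(r * ρ * Real.sin t) / f t) (Set.Ioo 0 Real.pi) t := by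
    intro t ht
    have h := (((Real.hasDerivAt_cos t).const_mul (2 * r * ρ)).const_add (r^2 + ρ^2)).sqrt
      (hpos t ht).ne'
    have hne : Real.sqrt (r^2 + ρ^2 + 2 * r * ρ * Real.cos t) ≠ 0 :=
      (Real.sqrt_pos.2 (hpos t ht)).ne'
    have e : -(r * ρ * Real.sin t) / f t =
        2 * r * ρ * (-Real.sin t) / (2 * Real.sqrt (r^2 + ρ^2 + 2 * r * ρ * Real.cos t)) := by
      change -(r * ρ * Real.sin t) / Real.sqrt (r^2 + ρ^2 + 2 * r * ρ * Real.cos t) = _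
      field_simp
    rw [e]
    exact h.hasDerivWithinAt
  rw [intervalIntegral.integral_of_le hle, integral_Ioc_eq_integral_Ioo, ← himg,
    integral_image_eq_integral_abs_deriv_smul measurableSet_Ioo hder hinj,
    intervalIntegral.integral_of_le Real.pi_pos.le, integral_Ioc_eq_integral_Ioo,
    ← integral_const_mul]
  refine setIntegral_congr_fun measurableSet_Ioo ?_
  intro t ht
  have hs := Real.sin_pos_of_mem_Ioo ht
  have hfp : 0 < f t := Real.sqrt_pos.2 (hpos t ht)
  have hfs : f t ^ 2 = r^2 + ρ^2 + 2 * r * ρ * Real.cos t := Real.sq_sqrt (hpos t ht).le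
  have hk : hker (f t) ρ r = (2 * r * ρ * Real.sin t)⁻¹ := by
    unfold hker
    rw [hfs, ← mul_inv, ← Real.sqrt_mul (by nlinarith [hcos t ht])]
    congr 1
    rw [Real.sqrt_eq_iff_mul_self_eq (by
      apply mul_nonneg <;> nlinarith [hcos t ht]) (by positivity)]
    linear_combination (-4 * r^2 * ρ^2) * Real.sin_sq_add_cos_sq t
  simp only [smul_eq_mul]
  rw [hk, abs_div, abs_neg, abs_of_pos hfp, abs_of_pos (by positivity)]
  change _ = 1 / 2 * b (f t)
  field_simp

theorem circle_int (b : ℝ → ℝ) (hb : ContinuousOn b (Set.Ici 0))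
    (x₁ x₂ ρ r : ℝ) (hr : r = Real.sqrt (x₁^2 + x₂^2)) (hr0 : 0 < r) :
    (∫ θ in (0:ℝ)..(2 * Real.pi),
        b (Real.sqrt ((x₁ + ρ * Real.cos θ)^2 + (x₂ + ρ * Real.sin θ)^2)))
    = 2 * ∫ t in (0:ℝ)..Real.pi, b (Real.sqrt (r^2 + ρ^2 + 2 * r * ρ * Real.cos t)) := by
  set g : ℝ → ℝ := fun t => b (Real.sqrt (r^2 + ρ^2 + 2 * r * ρ * Real.cos t)) with hg
  have hgc : Continuous g :=
    hb.comp_continuous (by fun_prop) (fun t => Real.sqrt_nonneg _)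
  have hgp : Function.Periodic g (2 * Real.pi) := by
    intro t; simp only [hg, Real.cos_add_two_pi]
  obtain ⟨φ, h1, h2⟩ : ∃ φ, x₁ = r * Real.cos φ ∧ x₂ = r * Real.sin φ := by
    have hn : ‖(⟨x₁, x₂⟩ : ℂ)‖ = r := by
      rw [hr, Complex.norm_def, Complex.normSq_mk]; congr 1; ring
    refine ⟨Complex.arg ⟨x₁, x₂⟩, ?_, ?_⟩
    · rw [← hn, Complex.norm_mul_cos_arg]
    · rw [← hn, Complex.norm_mul_sin_arg]
  have e : ∀ θ, b (Real.sqrt ((x₁ + ρ * Real.cos θ)^2 + (x₂ + ρ * Real.sin θ)^2)) = g (θ - φ) := by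
    intro θ
    simp only [hg]
    rw [Real.cos_sub, h1, h2]
    congr 2
    linear_combination r^2 * Real.sin_sq_add_cos_sq φ + ρ^2 * Real.sin_sq_add_cos_sq θ
  simp only [e]
  rw [intervalIntegral.integral_comp_sub_right g φ]
  have h3 := hgp.intervalIntegral_add_eq (0 - φ) (-Real.pi)
  rw [show 0 - φ + 2 * Real.pi = 2 * Real.pi - φ by ring,
    show -Real.pi + 2 * Real.pi = Real.pi by ring] at h3
  rw [h3, ← intervalIntegral.integral_add_adjacent_intervals (b := 0)
    (hgc.intervalIntegrable _ _) (hgc.intervalIntegrable _ _)]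
  have h4 : ∫ t in (-Real.pi)..0, g t = ∫ t in (0:ℝ)..Real.pi, g t := by
    have h5 := intervalIntegral.integral_comp_neg (a := 0) (b := Real.pi) g
    rw [neg_zero] at h5
    rw [← h5]
    simp only [hg, Real.cos_neg]
  rw [h4]; ring

/-- The spherical-means lemma (Lemma `moysp` of the paper): change of variables for
averages of a radial function over a circle of radius `ρ` centered at `x`, together
with the algebraic identity for the kernel `h`. -/
theorem stmt7 (b : ℝ → ℝ) (hb : ContinuousOn b (Set.Ici 0))
    (x₁ x₂ ρ r : ℝ) (hr : r = Real.sqrt (x₁^2 + x₂^2)) (hr0 : 0 < r) (hρ : 0 < ρ) :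
    (∫ θ in (0:ℝ)..(2 * Real.pi),
        b (Real.sqrt ((x₁ + ρ * Real.cos θ)^2 + (x₂ + ρ * Real.sin θ)^2)))
      = 4 * ∫ lam in (|ρ - r|)..(ρ + r), lam * b lam * hker lam ρ r
    ∧ ∀ lam : ℝ, |ρ - r| < lam → lam < ρ + r →
        hker lam ρ r =
          (Real.sqrt ((lam + r)^2 - ρ^2))⁻¹ * (Real.sqrt (ρ^2 - (lam - r)^2))⁻¹ := by


  refine ⟨?_, fun lam h1 h2 => hker_alt lam ρ r hr0 hρ h1 h2⟩
  rw [circle_int b hb x₁ x₂ ρ r hr hr0, change_var b ρ r hr0 hρ]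
  ring
end
end

section
/- Let M > 0 and let φ : [0,∞) × [0,∞) → ℝ, (t,r) ↦ φ(t,r), be C¹ with |∂_tφ(t,r)| + |∂_rφ(t,r)| ≤ M (1+t+r)^{−1/2} (1+|t−r|)^{−3/2} for all t, r ≥ 0. Define a(t,R) = ∫₀^R r ( (∂_rφ)² + (∂_tφ)² )(t,r) dr and E(t) = ∫₀^∞ r ( (∂_rφ)² + (∂_tφ)² )(t,r) dr (which is finite). Then there is an absolute constant C such that for all t ≥ 0: |a(t,R)| ≤ C M² (1+|t−R|)^{−2} whenever 0 ≤ R ≤ t, and |a(t,R) − E(t)| ≤ C M² (1+|t−R|)^{−2} whenever R ≥ t. -/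
open MeasureTheory

noncomputable section

/-- partial derivative in the time variable of a function `ℝ → ℝ → ℝ` ((t,r) curried). -/
def qdt (φ : ℝ → ℝ → ℝ) : ℝ → ℝ → ℝ :=
  fun t r => deriv (fun s => φ s r) t

/-- partial derivative in the radial variable. -/
def qdr (φ : ℝ → ℝ → ℝ) : ℝ → ℝ → ℝ :=
  fun t r => deriv (fun s => φ t s) r

/-- `a(t,R) = ∫₀^R r((∂_rφ)² + (∂_tφ)²)(t,r) dr`. -/
def aER (φ : ℝ → ℝ → ℝ) (t R : ℝ) : ℝ :=
  ∫ r in (0:ℝ)..R, r * ((qdr φ t r)^2 + (qdt φ t r)^2)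

/-- the energy `E(t) = ∫₀^∞ r((∂_rφ)² + (∂_tφ)²)(t,r) dr`. -/
def EER (φ : ℝ → ℝ → ℝ) (t : ℝ) : ℝ :=
  ∫ r in Set.Ioi (0:ℝ), r * ((qdr φ t r)^2 + (qdt φ t r)^2)

theorem er_cont (φ : ℝ → ℝ → ℝ) (h : ContDiff ℝ 1 (fun p : ℝ × ℝ => φ p.1 p.2)) (t : ℝ) :
    Continuous (fun r => r * ((qdr φ t r)^2 + (qdt φ t r)^2)) := by
  have hd : Differentiable ℝ (fun p : ℝ × ℝ => φ p.1 p.2) := h.differentiable (by norm_num)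
  have hc := h.continuous_fderiv (by norm_num)
  have h1 : ∀ r, qdr φ t r = fderiv ℝ (fun p : ℝ × ℝ => φ p.1 p.2) (t, r) (0, 1) := by
    intro r
    have hl : HasDerivAt (fun s : ℝ => (t, s)) ((0:ℝ), (1:ℝ)) r :=
      (hasDerivAt_const r t).prodMk (hasDerivAt_id r)
    exact ((hd (t, r)).hasFDerivAt.comp_hasDerivAt r hl).deriv
  have h2 : ∀ r, qdt φ t r = fderiv ℝ (fun p : ℝ × ℝ => φ p.1 p.2) (t, r) (1, 0) := by
    intro r
    have hl : HasDerivAt (fun s : ℝ => (s, r)) ((1:ℝ), (0:ℝ)) t :=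
      (hasDerivAt_id t).prodMk (hasDerivAt_const t r)
    exact ((hd (t, r)).hasFDerivAt.comp_hasDerivAt t hl).deriv
  simp only [h1, h2]
  have hp : Continuous (fun r : ℝ => fderiv ℝ (fun p : ℝ × ℝ => φ p.1 p.2) (t, r)) :=
    hc.comp (by fun_prop)
  have h3 := hp.clm_apply (continuous_const (y := ((0:ℝ), (1:ℝ))))
  have h4 := hp.clm_apply (continuous_const (y := ((1:ℝ), (0:ℝ))))
  exact continuous_id.mul ((h3.pow 2).add (h4.pow 2))

theorem er_bound {M t r x y : ℝ} (ht : 0 ≤ t) (hr : 0 ≤ r)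
    (h : |y| + |x| ≤ M * (1 + t + r) ^ (-(1/2) : ℝ) * (1 + |t - r|) ^ (-(3/2) : ℝ)) :
    r * (x^2 + y^2) ≤ M^2 * ((1 + |t - r|)^3)⁻¹ := by
  have hA : 0 < 1 + t + r := by linarith
  have hB : 0 < 1 + |t - r| := by positivity
  have e1 : ((1 + t + r) ^ (-(1/2) : ℝ))^2 = (1 + t + r)⁻¹ := by
    rw [← Real.rpow_natCast, ← Real.rpow_mul hA.le, ← Real.rpow_neg_one]; norm_num
  have e2 : ((1 + |t - r|) ^ (-(3/2) : ℝ))^2 = ((1 + |t - r|)^3)⁻¹ := by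
    rw [← Real.rpow_natCast, ← Real.rpow_mul hB.le, ← Real.rpow_natCast _ 3, ← Real.rpow_neg hB.le]
    norm_num
  have h5 : x^2 + y^2 ≤ (|y| + |x|)^2 := by
    rw [← sq_abs x, ← sq_abs y]; nlinarith [abs_nonneg x, abs_nonneg y]
  have h6 := pow_le_pow_left₀ (by positivity) h 2
  rw [mul_pow, mul_pow, e1, e2] at h6
  have h7 : r * (1 + t + r)⁻¹ ≤ 1 := by
    rw [← div_eq_mul_inv, div_le_one hA]; linarith
  calc r * (x^2 + y^2) ≤ r * (M ^ 2 * (1 + t + r)⁻¹ * ((1 + |t - r|)^3)⁻¹) :=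
        mul_le_mul_of_nonneg_left (h5.trans h6) hr
    _ = (r * (1 + t + r)⁻¹) * (M^2 * ((1 + |t - r|)^3)⁻¹) := by ring
    _ ≤ 1 * (M^2 * ((1 + |t - r|)^3)⁻¹) := mul_le_mul_of_nonneg_right h7 (by positivity)
    _ = _ := one_mul _

theorem er_in (t R : ℝ) (hR : 0 ≤ R) (hRt : R ≤ t) (M : ℝ) (f : ℝ → ℝ) (hf : Continuous f)
    (hb : ∀ r, 0 ≤ r → f r ≤ M^2 * ((1 + |t - r|)^3)⁻¹) :
    ∫ r in (0:ℝ)..R, f r ≤ M^2 * ((1 + (t - R))^2)⁻¹ := by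
  have hc : ContinuousOn (fun r : ℝ => M^2 * ((1 + (t - r))^3)⁻¹) (Set.uIcc 0 R) := by
    refine continuousOn_const.mul (ContinuousOn.inv₀ (by fun_prop) ?_)
    intro r hr
    rw [Set.uIcc_of_le hR] at hr
    have : 0 < 1 + (t - r) := by linarith [hr.2]
    positivity
  have h1 : ∫ r in (0:ℝ)..R, f r ≤ ∫ r in (0:ℝ)..R, M^2 * ((1 + (t - r))^3)⁻¹ := by
    refine intervalIntegral.integral_mono_on hR (hf.intervalIntegrable _ _)
      hc.intervalIntegrable ?_
    intro r hr
    have := hb r hr.1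
    rwa [abs_of_nonneg (by linarith [hr.2])] at this
  have h2 : ∫ r in (0:ℝ)..R, M^2 * ((1 + (t - r))^3)⁻¹ =
      M^2/2 * ((1 + (t - R))^2)⁻¹ - M^2/2 * ((1 + (t - 0))^2)⁻¹ := by
    refine intervalIntegral.integral_eq_sub_of_hasDerivAt
      (f := fun r => M^2/2 * ((1 + (t - r))^2)⁻¹) ?_ hc.intervalIntegrable
    intro r hr
    rw [Set.uIcc_of_le hR] at hr
    have hp : 0 < 1 + (t - r) := by linarith [hr.2]
    have := (((((hasDerivAt_id r).const_sub t).const_add 1).pow 2).inv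
      (by simpa using hp.ne')).const_mul (M^2/2)
    refine this.congr_deriv ?_
    simp only [id, Pi.pow_apply]
    field_simp
    norm_num
  have h3 : 0 ≤ M^2/2 * ((1 + (t - 0))^2)⁻¹ := by positivity
  have h4 : 0 ≤ M^2/2 * ((1 + (t - R))^2)⁻¹ := by positivity
  linarith

theorem er_out (t R : ℝ) (hRt : t ≤ R) (M : ℝ) :
    IntegrableOn (fun r : ℝ => M^2 * ((1 + (r - t))^3)⁻¹) (Set.Ioi R) ∧
    ∫ r in Set.Ioi R, M^2 * ((1 + (r - t))^3)⁻¹ ≤ M^2 * ((1 + (R - t))^2)⁻¹ := by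
  have hd : ∀ r ∈ Set.Ici R, HasDerivAt (fun r : ℝ => -(M^2/2) * ((1 + (r - t))^2)⁻¹)
      (M^2 * ((1 + (r - t))^3)⁻¹) r := by
    intro r hr
    have hp : 0 < 1 + (r - t) := by linarith [Set.mem_Ici.1 hr]
    have := (((((hasDerivAt_id r).sub_const t).const_add 1).pow 2).inv
      (by simpa using hp.ne')).const_mul (-(M^2/2))
    refine this.congr_deriv ?_
    simp only [id, Pi.pow_apply]
    field_simp
    norm_num
  have hn : ∀ r ∈ Set.Ioi R, 0 ≤ M^2 * ((1 + (r - t))^3)⁻¹ := by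
    intro r hr
    have hp : 0 < 1 + (r - t) := by linarith [Set.mem_Ioi.1 hr]
    positivity
  have hl : Filter.Tendsto (fun r : ℝ => -(M^2/2) * ((1 + (r - t))^2)⁻¹) Filter.atTop (nhds 0) := by
    have h1 : Filter.Tendsto (fun r : ℝ => 1 + (r - t)) Filter.atTop Filter.atTop :=
      Filter.tendsto_atTop_add_const_left _ _ (Filter.tendsto_atTop_add_const_right _ (-t) Filter.tendsto_id)
    have h2 := ((Filter.tendsto_pow_atTop (α := ℝ) (n := 2) (by norm_num)).comp h1).inv_tendsto_atTop
    simpa using h2.const_mul (-(M^2/2))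
  refine ⟨integrableOn_Ioi_deriv_of_nonneg' hd hn hl, ?_⟩
  rw [integral_Ioi_of_hasDerivAt_of_nonneg' hd hn hl]
  have h4 : 0 ≤ M^2/2 * ((1 + (R - t))^2)⁻¹ := by positivity
  linarith

/-- Decay of the Einstein–Rosen metric coefficient `a` (Section 1.2 of the paper). -/
theorem stmt11 :
    ∃ C : ℝ, 0 < C ∧
      ∀ (M : ℝ) (φ : ℝ → ℝ → ℝ), 0 < M →
        ContDiff ℝ 1 (fun p : ℝ × ℝ => φ p.1 p.2) →
        (∀ t r : ℝ, 0 ≤ t → 0 ≤ r →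
          |qdt φ t r| + |qdr φ t r| ≤
            M * (1 + t + r) ^ (-(1/2) : ℝ) * (1 + |t - r|) ^ (-(3/2) : ℝ)) →
        ∀ t : ℝ, 0 ≤ t →
          IntegrableOn (fun r => r * ((qdr φ t r)^2 + (qdt φ t r)^2)) (Set.Ioi 0) ∧
          (∀ R : ℝ, 0 ≤ R → R ≤ t →
            |aER φ t R| ≤ C * M^2 * (1 + |t - R|) ^ (-(2:ℝ))) ∧
          (∀ R : ℝ, t ≤ R →
            |aER φ t R - EER φ t| ≤ C * M^2 * (1 + |t - R|) ^ (-(2:ℝ))) := by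
  refine ⟨1, one_pos, ?_⟩
  intro M φ _ hφ hb t ht
  have hf := er_cont φ hφ t
  have hfb : ∀ r, 0 ≤ r → r * ((qdr φ t r)^2 + (qdt φ t r)^2) ≤ M^2 * ((1 + |t - r|)^3)⁻¹ :=
    fun r hr => er_bound ht hr (hb t r ht hr)
  have hfn : ∀ r, 0 ≤ r → 0 ≤ r * ((qdr φ t r)^2 + (qdt φ t r)^2) :=
    fun r hr => by positivity
  unfold aER EER
  obtain ⟨f, hfe⟩ : ∃ f : ℝ → ℝ, f = fun r => r * ((qdr φ t r)^2 + (qdt φ t r)^2) := ⟨_, rfl⟩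
  have hfe' : ∀ r, r * ((qdr φ t r)^2 + (qdt φ t r)^2) = f r := fun r => by rw [hfe]
  simp only [hfe'] at hf hfb hfn ⊢
  have hpw : ∀ R : ℝ, (1 + |t - R|) ^ (-(2:ℝ)) = ((1 + |t - R|)^2)⁻¹ := by
    intro R
    rw [Real.rpow_neg (by positivity)]; norm_num
  have hout : ∀ R, t ≤ R → ∀ r ∈ Set.Ioi R, f r ≤ M^2 * ((1 + (r - t))^3)⁻¹ := by
    intro R hR r hr
    have hr' := Set.mem_Ioi.1 hr
    have := hfb r (by linarith)
    rwa [abs_sub_comm, abs_of_nonneg (by linarith)] at this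
  have hint : ∀ R, t ≤ R → IntegrableOn f (Set.Ioi R) := by
    intro R hR
    refine Integrable.mono' (er_out t R hR M).1 hf.aestronglyMeasurable ?_
    refine (ae_restrict_mem measurableSet_Ioi).mono fun r hr => ?_
    have hr' := Set.mem_Ioi.1 hr
    rw [Real.norm_of_nonneg (hfn r (by linarith))]
    exact hout R hR r hr
  have hI : IntegrableOn f (Set.Ioi 0) := by
    rw [← Set.Ioc_union_Ioi_eq_Ioi ht]
    exact (hf.integrableOn_Ioc).union (hint t le_rfl)
  refine ⟨hI, ?_, ?_⟩
  · intro R hR hRt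
    have h0 : 0 ≤ ∫ r in (0:ℝ)..R, f r :=
      intervalIntegral.integral_nonneg hR fun r hr => hfn r hr.1
    rw [hpw, one_mul, abs_of_nonneg h0, abs_of_nonneg (sub_nonneg.2 hRt)]
    exact er_in t R hR hRt M f hf hfb
  · intro R hR
    have h0 : 0 ≤ ∫ r in Set.Ioi R, f r :=
      setIntegral_nonneg measurableSet_Ioi fun r hr => hfn r (by linarith [Set.mem_Ioi.1 hr])
    have h1 := intervalIntegral.integral_interval_add_Ioi hI (hint R hR)
    rw [← h1, sub_add_cancel_left, abs_neg, abs_of_nonneg h0, hpw, one_mul, abs_sub_comm,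
      abs_of_nonneg (sub_nonneg.2 hR)]
    exact (setIntegral_mono_on (hint R hR) (er_out t R hR M).1 measurableSet_Ioi (hout R hR)).trans
      (er_out t R hR M).2
end
end

section
/- Let β > 1. Then there is a constant C = C(β) such that for every t ≥ 0 and every compactly supported C¹ function u : ℝ² → ℝ: ∫_{|x| ≥ t} u(x)² (1+|x|−t)^{β−2} dx ≤ C ∫_{|x| ≥ t} ( (x/|x|)·∇u(x) )² (1+|x|−t)^β dx. -/
open MeasureTheory

noncomputable section

lemma hardy_one_dim (β : ℝ) (hβ : 1 < β) (t R : ℝ) (ht : 0 ≤ t) (htR : t ≤ R)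
    (v v' : ℝ → ℝ) (hv : ∀ r, HasDerivAt v (v' r) r) (hv' : Continuous v') (hR : v R = 0) :
    0 ≤ ∫ r in t..R, r * (4 / (β - 1) ^ 2 * ((v' r) ^ 2 * (1 + r - t) ^ β)
      - (v r) ^ 2 * (1 + r - t) ^ (β - 2)) := by
  have hb : 0 < β - 1 := by linarith
  have hvc : Continuous v := continuous_iff_continuousAt.2 fun r => (hv r).continuousAt
  have hw : ∀ p : ℝ, ContinuousOn (fun r : ℝ => (1 + r - t) ^ p) (Set.uIcc t R) := by
    intro p
    apply ContinuousOn.rpow_const (by fun_prop)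
    intro r hr
    rw [Set.uIcc_of_le htR] at hr
    left; linarith [hr.1]
  have hwa := hw β
  have hwb := hw (β - 1)
  have hwc := hw (β - 2)
  set G' : ℝ → ℝ := fun r => (2 * v r * v' r * (1 + r - t) ^ (β - 1)
      + (v r) ^ 2 * ((β - 1) * (1 + r - t) ^ (β - 2))) * r + (v r) ^ 2 * (1 + r - t) ^ (β - 1)
    with hG'
  have hG'c : ContinuousOn G' (Set.uIcc t R) := by
    have := hvc.continuousOn (s := Set.uIcc t R)
    have := hv'.continuousOn (s := Set.uIcc t R)
    fun_prop
  have hkc : ContinuousOn (fun r => r * (4 / (β - 1) ^ 2 * ((v' r) ^ 2 * (1 + r - t) ^ β)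
      - (v r) ^ 2 * (1 + r - t) ^ (β - 2))) (Set.uIcc t R) := by
    have := hvc.continuousOn (s := Set.uIcc t R)
    have := hv'.continuousOn (s := Set.uIcc t R)
    fun_prop
  have hder : ∀ r ∈ Set.uIcc t R,
      HasDerivAt (fun r => (v r) ^ 2 * (1 + r - t) ^ (β - 1) * r) (G' r) r := by
    intro r hr
    rw [Set.uIcc_of_le htR] at hr
    have hpos : 0 < 1 + r - t := by linarith [hr.1]
    have h1 : HasDerivAt (fun r : ℝ => 1 + r - t) 1 r :=
      ((hasDerivAt_id r).const_add 1).sub_const t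
    have h2 := h1.rpow_const (p := β - 1) (Or.inl hpos.ne')
    have h3 := (((hv r).pow 2).mul h2).mul (hasDerivAt_id r)
    refine HasDerivAt.congr_deriv h3 ?_
    simp only [hG', Pi.mul_apply, Pi.pow_apply, id]
    rw [show β - 1 - 1 = β - 2 by ring]
    push_cast
    ring
  have hFTC := intervalIntegral.integral_eq_sub_of_hasDerivAt hder hG'c.intervalIntegrable
  have hle : ∫ r in t..R, (-(2 / (β - 1)) * G' r) ≤ ∫ r in t..R,
      r * (4 / (β - 1) ^ 2 * ((v' r) ^ 2 * (1 + r - t) ^ β)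
      - (v r) ^ 2 * (1 + r - t) ^ (β - 2)) := by
    apply intervalIntegral.integral_mono_on htR
      (hG'c.intervalIntegrable.const_mul _) hkc.intervalIntegrable
    intro r hr
    have hpos : 0 < 1 + r - t := by linarith [hr.1]
    have e1 : (1 + r - t) ^ (β - 1) = (1 + r - t) ^ (β - 2) * (1 + r - t) := by
      rw [← Real.rpow_add_one hpos.ne']; congr 1; ring
    have e2 : (1 + r - t) ^ β = (1 + r - t) ^ (β - 2) * (1 + r - t) ^ 2 := by
      rw [← Real.rpow_natCast, ← Real.rpow_add hpos]; congr 1; push_cast; ring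
    have hp : 0 < (1 + r - t) ^ (β - 2) := Real.rpow_pos_of_pos hpos _
    have hr0 : 0 ≤ r := ht.trans hr.1
    simp only [hG']
    rw [e1, e2]
    generalize (1 + r - t) ^ (β - 2) = P at *
    generalize (1 + r - t) = w at *
    have key : 0 ≤ r * P * (v r + 2 / (β - 1) * v' r * w) ^ 2
        + 2 / (β - 1) * ((v r) ^ 2 * (P * w)) := by positivity
    have : r * (4 / (β - 1) ^ 2 * (v' r ^ 2 * (P * w ^ 2)) - v r ^ 2 * P)
       - (-(2 / (β - 1)) * ((2 * v r * v' r * (P * w) + v r ^ 2 * ((β - 1) * P)) * r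
          + v r ^ 2 * (P * w)))
       = r * P * (v r + 2 / (β - 1) * v' r * w) ^ 2
        + 2 / (β - 1) * ((v r) ^ 2 * (P * w)) := by
      field_simp
      ring
    linarith
  refine le_trans ?_ hle
  rw [intervalIntegral.integral_const_mul, hFTC, hR]
  simp only [add_sub_cancel_right, Real.one_rpow]
  have : 0 ≤ 2 / (β - 1) * (v t ^ 2 * t) := by positivity
  linarith

lemma polar_nonneg (h : ℝ × ℝ → ℝ)
    (hh : ∀ θ : ℝ, 0 ≤ ∫ r in Set.Ioi (0:ℝ), r * h (r * Real.cos θ, r * Real.sin θ)) :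
    0 ≤ ∫ x, h x := by
  rw [← integral_comp_polarCoord_symm]
  by_cases hi : IntegrableOn (fun p : ℝ × ℝ => p.1 • h (polarCoord.symm p)) polarCoord.target
  · rw [polarCoord_target, Measure.volume_eq_prod, ← Measure.prod_restrict]
    rw [IntegrableOn, polarCoord_target, Measure.volume_eq_prod, ← Measure.prod_restrict] at hi
    rw [integral_prod_symm _ hi]
    apply integral_nonneg
    intro θ
    simpa [polarCoord_symm_apply] using hh θ
  · rw [integral_undef hi]

/-- Exterior-region weighted Hardy inequality (estimate `(har1)` in the proof of the
weighted Hardy inequality of the paper); the constant is uniform in `t`. -/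
theorem stmt13 (β : ℝ) (hβ : 1 < β) :
    ∃ C : ℝ, 0 < C ∧
      ∀ t : ℝ, 0 ≤ t → ∀ u : ℝ × ℝ → ℝ, ContDiff ℝ 1 u → HasCompactSupport u →
        ∫ x in {x : ℝ × ℝ | t ≤ Real.sqrt (x.1^2 + x.2^2)},
            (u x)^2 * (1 + Real.sqrt (x.1^2 + x.2^2) - t) ^ (β - 2)
          ≤ C * ∫ x in {x : ℝ × ℝ | t ≤ Real.sqrt (x.1^2 + x.2^2)},
              ((x.1 * fderiv ℝ u x (1, 0) + x.2 * fderiv ℝ u x (0, 1))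
                  / Real.sqrt (x.1^2 + x.2^2))^2
                * (1 + Real.sqrt (x.1^2 + x.2^2) - t) ^ β := by
  have hb : 0 < β - 1 := by linarith
  refine ⟨4 / (β - 1) ^ 2, by positivity, ?_⟩
  intro t ht u hu hcs
  have hfd : Continuous (fderiv ℝ u) := hu.continuous_fderiv (by norm_num)
  have hfa : Continuous (fun x => fderiv ℝ u x (1, 0)) := hfd.clm_apply continuous_const
  have hfb : Continuous (fun x => fderiv ℝ u x (0, 1)) := hfd.clm_apply continuous_const
  have hud : Differentiable ℝ u := hu.differentiable (by norm_num)
  set S : Set (ℝ × ℝ) := {x : ℝ × ℝ | t ≤ Real.sqrt (x.1^2 + x.2^2)} with hS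
  have hSm : MeasurableSet S := (isClosed_le continuous_const (by fun_prop)).measurableSet
  set f1 : ℝ × ℝ → ℝ := fun x => (u x)^2 * (1 + Real.sqrt (x.1^2 + x.2^2) - t) ^ (β - 2) with hf1
  set f2 : ℝ × ℝ → ℝ := fun x => ((x.1 * fderiv ℝ u x (1, 0) + x.2 * fderiv ℝ u x (0, 1))
                  / Real.sqrt (x.1^2 + x.2^2))^2
                * (1 + Real.sqrt (x.1^2 + x.2^2) - t) ^ β with hf2
  have hf2nn : 0 ≤ ∫ x in S, f2 x := by
    apply setIntegral_nonneg hSm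
    intro x hx
    have : 0 ≤ 1 + Real.sqrt (x.1^2 + x.2^2) - t := by
      have : t ≤ Real.sqrt (x.1^2 + x.2^2) := hx
      linarith
    simp only [hf2]
    positivity
  by_cases hi1 : IntegrableOn f1 S
  swap
  · rw [integral_undef hi1]; positivity
  have hi2 : IntegrableOn f2 S := by
    set g : ℝ × ℝ → ℝ := fun x => (|fderiv ℝ u x (1, 0)| + |fderiv ℝ u x (0, 1)|) ^ 2
      * (max 1 (1 + Real.sqrt (x.1^2 + x.2^2) - t)) ^ β with hg
    have hgc : Continuous g := by
      have : Continuous fun x : ℝ × ℝ => (max 1 (1 + Real.sqrt (x.1^2 + x.2^2) - t)) ^ β := by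
        apply Continuous.rpow_const (by fun_prop)
        intro x; left
        have : (1:ℝ) ≤ max 1 (1 + Real.sqrt (x.1^2 + x.2^2) - t) := le_max_left _ _
        linarith
      fun_prop
    have hgs : HasCompactSupport g := by
      apply (hcs.fderiv (𝕜 := ℝ)).mono
      intro x hx hx0
      apply hx
      simp [hg, hx0]
    have hgi : IntegrableOn g S := (hgc.integrable_of_hasCompactSupport hgs).integrableOn
    refine Integrable.mono' hgi ?_ ?_
    · have h1 := hfa.measurable
      have h2 := hfb.measurable
      apply Measurable.aestronglyMeasurable
      fun_prop
    · filter_upwards [ae_restrict_mem hSm] with x hx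
      have hx' : t ≤ Real.sqrt (x.1^2 + x.2^2) := hx
      have hm : max 1 (1 + Real.sqrt (x.1^2 + x.2^2) - t) = 1 + Real.sqrt (x.1^2 + x.2^2) - t :=
        max_eq_right (by linarith)
      have hp : 0 ≤ 1 + Real.sqrt (x.1^2 + x.2^2) - t := by linarith
      have hpp := Real.rpow_nonneg hp β
      simp only [hf2, hg, hm]
      rw [Real.norm_of_nonneg (by positivity)]
      apply mul_le_mul_of_nonneg_right _ hpp
      rw [sq_le_sq]
      rw [abs_of_nonneg (a := |fderiv ℝ u x (1, 0)| + |fderiv ℝ u x (0, 1)|) (by positivity)]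
      rw [abs_div, abs_of_nonneg (Real.sqrt_nonneg _)]
      apply div_le_of_le_mul₀ (Real.sqrt_nonneg _) (by positivity)
      have ha : |x.1| ≤ Real.sqrt (x.1^2 + x.2^2) := Real.abs_le_sqrt (by nlinarith [sq_nonneg x.2])
      have hb : |x.2| ≤ Real.sqrt (x.1^2 + x.2^2) := Real.abs_le_sqrt (by nlinarith [sq_nonneg x.1])
      refine (abs_add_le _ _).trans ?_
      rw [abs_mul, abs_mul]
      have := mul_le_mul_of_nonneg_right ha (abs_nonneg (fderiv ℝ u x (1, 0)))
      have := mul_le_mul_of_nonneg_right hb (abs_nonneg (fderiv ℝ u x (0, 1)))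
      linarith
  -- the radius beyond which `u` vanishes
  obtain ⟨R0, hR0⟩ := hcs.isCompact.bddAbove_image
    (f := fun x : ℝ × ℝ => Real.sqrt (x.1^2 + x.2^2)) (by fun_prop)
  have hout : ∀ x : ℝ × ℝ, R0 < Real.sqrt (x.1^2 + x.2^2) → x ∉ tsupport u := by
    intro x hx hxs
    have : Real.sqrt (x.1^2 + x.2^2) ≤ R0 := hR0 ⟨x, hxs, rfl⟩
    linarith
  have hu0 : ∀ x : ℝ × ℝ, R0 < Real.sqrt (x.1^2 + x.2^2) → u x = 0 :=
    fun x hx => image_eq_zero_of_notMem_tsupport (hout x hx)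
  have hfd0 : ∀ x : ℝ × ℝ, R0 < Real.sqrt (x.1^2 + x.2^2) → fderiv ℝ u x = 0 := by
    intro x hx
    by_contra hne
    exact hout x hx (support_fderiv_subset ℝ hne)
  have main : 0 ≤ ∫ x in S, (4 / (β - 1) ^ 2 * f2 x - f1 x) := by
    rw [← integral_indicator hSm]
    apply polar_nonneg
    intro θ
    set R := max t R0 + 1 with hR
    have htR : t ≤ R := by have := le_max_left t R0; linarith
    have hR0R : R0 < R := by have := le_max_right t R0; linarith
    have hsq : ∀ r : ℝ, 0 ≤ r →
        Real.sqrt ((r * Real.cos θ)^2 + (r * Real.sin θ)^2) = r := by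
      intro r hr
      rw [show (r * Real.cos θ)^2 + (r * Real.sin θ)^2
        = r ^ 2 * (Real.sin θ ^ 2 + Real.cos θ ^ 2) by ring, Real.sin_sq_add_cos_sq, mul_one,
        Real.sqrt_sq hr]
    set v : ℝ → ℝ := fun r => u (r * Real.cos θ, r * Real.sin θ) with hv
    set v' : ℝ → ℝ := fun r =>
      Real.cos θ * fderiv ℝ u (r * Real.cos θ, r * Real.sin θ) (1, 0)
      + Real.sin θ * fderiv ℝ u (r * Real.cos θ, r * Real.sin θ) (0, 1) with hv'
    have hvd : ∀ r, HasDerivAt v (v' r) r := by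
      intro r
      have h1 : HasDerivAt (fun r : ℝ => (r * Real.cos θ, r * Real.sin θ))
          (Real.cos θ, Real.sin θ) r := by
        have ha := (hasDerivAt_id r).mul_const (Real.cos θ)
        have hb := (hasDerivAt_id r).mul_const (Real.sin θ)
        simpa using ha.prodMk hb
      have h2 := (hud (r * Real.cos θ, r * Real.sin θ)).hasFDerivAt.comp_hasDerivAt r h1
      refine HasDerivAt.congr_deriv h2 ?_
      have : ((Real.cos θ, Real.sin θ) : ℝ × ℝ)
        = Real.cos θ • ((1, 0) : ℝ × ℝ) + Real.sin θ • ((0, 1) : ℝ × ℝ) := by simp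
      rw [this, map_add, map_smul, map_smul]
      simp [hv']
    have hv'c : Continuous v' := by
      have hc : Continuous (fun r : ℝ => (r * Real.cos θ, r * Real.sin θ)) := by fun_prop
      have := hfa.comp hc
      have := hfb.comp hc
      simp only [Function.comp_def] at *
      fun_prop
    have hR0' : 0 ≤ R := ht.trans htR
    have hvR : v R = 0 := hu0 _ (by simpa only [hsq R hR0'] using hR0R)
    have h1d := hardy_one_dim β hβ t R ht htR v v' hvd hv'c hvR
    rw [intervalIntegral.integral_of_le htR] at h1d
    have hval : ∀ r : ℝ, 0 < r → t ≤ r →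
        r * S.indicator (fun x => 4 / (β - 1) ^ 2 * f2 x - f1 x) (r * Real.cos θ, r * Real.sin θ)
        = r * (4 / (β - 1) ^ 2 * ((v' r) ^ 2 * (1 + r - t) ^ β)
      - (v r) ^ 2 * (1 + r - t) ^ (β - 2)) := by
      intro r hr htr
      rw [Set.indicator_of_mem (by simpa only [hS, Set.mem_setOf_eq, hsq r hr.le] using htr)]
      simp only [hf1, hf2, hsq r hr.le, hv, hv']
      congr 5
      field_simp
    refine h1d.trans_eq ?_
    symm
    rw [setIntegral_eq_of_subset_of_ae_diff_eq_zero (s := Set.Ioc t R) (t := Set.Ioi (0:ℝ))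
      measurableSet_Ioi.nullMeasurableSet (fun r hr => lt_of_le_of_lt ht hr.1)]
    · apply setIntegral_congr_fun measurableSet_Ioc
      intro r hr
      exact hval r (lt_of_le_of_lt ht hr.1) hr.1.le
    · have hne : ∀ᵐ r : ℝ, r ≠ t := by simp [ae_iff]
      filter_upwards [hne] with r hrt hr
      have hr0 : 0 < r := hr.1
      rcases lt_or_gt_of_ne hrt with hlt | hgt
      · rw [Set.indicator_of_notMem, mul_zero]
        simpa only [hS, Set.mem_setOf_eq, hsq r hr0.le, not_le] using hlt
      · have hRr : R < r := by
          by_contra hcon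
          exact hr.2 ⟨hgt, not_lt.1 hcon⟩
        have hlt : R0 < Real.sqrt ((r * Real.cos θ)^2 + (r * Real.sin θ)^2) := by
          rw [hsq r hr0.le]; linarith
        rw [hval r hr0 hgt.le]
        simp [hv, hv', hu0 (r * Real.cos θ, r * Real.sin θ) hlt,
          hfd0 (r * Real.cos θ, r * Real.sin θ) hlt]
  rw [integral_sub (hi2.const_mul _) hi1, integral_const_mul] at main
  linarith
end
end

section
/- Let ν > 1. Then there is a constant C = C(ν) such that for every T > 0 and every σ with −T ≤ σ ≤ T: ∫_{−T}^{σ} (T−α)^{−1/2} (1+|α|)^{−ν} dα ≤ C T^{−1/2}. -/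
open MeasureTheory

noncomputable section

lemma aux_pt (ν : ℝ) (hν : 1 < ν) (T α : ℝ) (hT : 0 < T) (h : α ≤ T) :
    (Real.sqrt (T - α))⁻¹ * (1 + |α|) ^ (-ν) ≤
      (Real.sqrt 2 * (Real.sqrt T)⁻¹) * (1 + ‖α‖) ^ (-ν) +
        (2 / T) * (T - α) ^ (-(1/2) : ℝ) := by
  have e : (T - α) ^ (-(1/2) : ℝ) = (Real.sqrt (T - α))⁻¹ := by
    rw [Real.rpow_neg (by linarith), Real.sqrt_eq_rpow]
  rw [e, Real.norm_eq_abs]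
  have hp : 0 < 1 + |α| := by positivity
  have hq : 0 ≤ (1 + |α|) ^ (-ν) := by positivity
  have hs : 0 ≤ (Real.sqrt (T - α))⁻¹ := by positivity
  rcases le_total α (T / 2) with h1 | h1
  · have h2 : (Real.sqrt (T - α))⁻¹ ≤ Real.sqrt 2 * (Real.sqrt T)⁻¹ := by
      have : (Real.sqrt (T / 2))⁻¹ = Real.sqrt 2 * (Real.sqrt T)⁻¹ := by
        rw [Real.sqrt_div hT.le, inv_div, div_eq_mul_inv]
      rw [← this]
      apply inv_anti₀ (Real.sqrt_pos.2 (by linarith))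
      exact Real.sqrt_le_sqrt (by linarith)
    have := mul_le_mul_of_nonneg_right h2 hq
    have h3 : 0 ≤ (2 / T) * (Real.sqrt (T - α))⁻¹ := by positivity
    linarith
  · have h2 : (1 + |α|) ^ (-ν) ≤ 2 / T := by
      have h4 : T / 2 ≤ 1 + |α| := by linarith [le_abs_self α]
      calc (1 + |α|) ^ (-ν) ≤ (1 + |α|) ^ (-1 : ℝ) :=
            Real.rpow_le_rpow_of_exponent_le (by linarith [abs_nonneg α]) (by linarith)
        _ = (1 + |α|)⁻¹ := Real.rpow_neg_one _
        _ ≤ (T / 2)⁻¹ := inv_anti₀ (by linarith) h4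
        _ = 2 / T := by rw [inv_div]
    have := mul_le_mul_of_nonneg_left h2 hs
    have h3 : 0 ≤ (Real.sqrt 2 * (Real.sqrt T)⁻¹) * (1 + |α|) ^ (-ν) := by positivity
    linarith

/-- One-dimensional integral estimate for the 'second factor' in the proof of the
L∞–L∞ estimate for the 2+1-dimensional wave equation. -/
theorem stmt17 (ν : ℝ) (hν : 1 < ν) :
    ∃ C : ℝ, 0 < C ∧
      ∀ T σ : ℝ, 0 < T → -T ≤ σ → σ ≤ T →
        ∫ α in (-T)..σ, (Real.sqrt (T - α))⁻¹ * (1 + |α|) ^ (-ν)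
          ≤ C * T ^ (-(1/2) : ℝ) := by
  have hI : Integrable (fun α : ℝ => (1 + ‖α‖) ^ (-ν)) :=
    integrable_one_add_norm (by simpa using hν)
  have hK : 0 ≤ ∫ α : ℝ, (1 + ‖α‖) ^ (-ν) := integral_nonneg fun α => by positivity
  refine ⟨Real.sqrt 2 * (∫ α : ℝ, (1 + ‖α‖) ^ (-ν)) + 4 * Real.sqrt 2, by positivity, ?_⟩
  intro T σ hT h1 h2
  have hJ : IntervalIntegrable (fun α : ℝ => (T - α) ^ (-(1/2) : ℝ)) volume (-T) T := by
    have := (intervalIntegral.intervalIntegrable_rpow' (a := 2 * T) (b := 0)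
      (r := -(1/2)) (by norm_num)).comp_sub_left T
    convert this using 1 <;> ring
  have hJv : ∫ α in (-T)..T, (T - α) ^ (-(1/2) : ℝ) = 2 * Real.sqrt (2 * T) := by
    rw [intervalIntegral.integral_comp_sub_left (fun x => x ^ (-(1/2) : ℝ)) T,
      integral_rpow (Or.inl (by norm_num)), Real.sqrt_eq_rpow]
    have : (-(1/2) + 1 : ℝ) = 1/2 := by norm_num
    rw [this, sub_self, Real.zero_rpow (by norm_num)]
    rw [show T - -T = 2 * T by ring]
    ring
  have hJ' : IntegrableOn (fun α : ℝ => (T - α) ^ (-(1/2) : ℝ)) (Set.Ioc (-T) T) :=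
    (intervalIntegrable_iff_integrableOn_Ioc_of_le (by linarith)).1 hJ
  have hsub : Set.Ioc (-T) σ ⊆ Set.Ioc (-T) T := Set.Ioc_subset_Ioc_right h2
  rw [intervalIntegral.integral_of_le (by linarith)] at hJv
  have b1 : ∫ α in Set.Ioc (-T) σ, (T - α) ^ (-(1/2) : ℝ) ≤ 2 * Real.sqrt (2 * T) := by
    rw [← hJv]
    apply setIntegral_mono_set hJ' _ (Filter.Eventually.of_forall hsub)
    filter_upwards [ae_restrict_mem measurableSet_Ioc] with α hα
    exact Real.rpow_nonneg (by linarith [hα.2]) _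
  have b2 : ∫ α in Set.Ioc (-T) σ, (1 + ‖α‖) ^ (-ν) ≤ ∫ α : ℝ, (1 + ‖α‖) ^ (-ν) :=
    setIntegral_le_integral hI (Filter.Eventually.of_forall fun α => by
      simp only [Pi.zero_apply]; positivity)
  have i1 := (hI.integrableOn (s := Set.Ioc (-T) σ)).const_mul (Real.sqrt 2 * (Real.sqrt T)⁻¹)
  have i2 := (hJ'.mono_set hsub).const_mul (2 / T)
  rw [intervalIntegral.integral_of_le h1]
  have eT : T ^ (-(1/2) : ℝ) = (Real.sqrt T)⁻¹ := by
    rw [Real.rpow_neg hT.le, Real.sqrt_eq_rpow]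
  have hs : 0 < Real.sqrt T := Real.sqrt_pos.2 hT
  calc _ ≤ ∫ α in Set.Ioc (-T) σ, ((Real.sqrt 2 * (Real.sqrt T)⁻¹) * (1 + ‖α‖) ^ (-ν) +
        (2 / T) * (T - α) ^ (-(1/2) : ℝ)) := by
        apply integral_mono_of_nonneg
        · exact Filter.Eventually.of_forall fun α => by
            simp only [Pi.zero_apply]; positivity
        · exact i1.add i2
        · filter_upwards [ae_restrict_mem measurableSet_Ioc] with α hα
          exact aux_pt ν hν T α hT (hα.2.trans h2)
    _ = (Real.sqrt 2 * (Real.sqrt T)⁻¹) * (∫ α in Set.Ioc (-T) σ, (1 + ‖α‖) ^ (-ν)) +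
        (2 / T) * ∫ α in Set.Ioc (-T) σ, (T - α) ^ (-(1/2) : ℝ) := by
        rw [integral_add i1 i2, integral_const_mul, integral_const_mul]
    _ ≤ (Real.sqrt 2 * (Real.sqrt T)⁻¹) * (∫ α : ℝ, (1 + ‖α‖) ^ (-ν)) +
        (2 / T) * (2 * Real.sqrt (2 * T)) := by gcongr
    _ = _ := by
        have e2 : (2 / T) * (2 * Real.sqrt (2 * T)) = 4 * Real.sqrt 2 * (Real.sqrt T)⁻¹ := by
          rw [Real.sqrt_mul (by norm_num)]
          field_simp
          rw [Real.sq_sqrt hT.le]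
          ring
        rw [eT, e2]
        ring
end
end

section
/- Let μ > 3/2. Then there is a constant C = C(μ) such that for every T ≥ 1: ∫₀^T β (T−β)^{−1/2} (1+β)^{−μ} dβ ≤ C T^{−1/2} E_μ(T), where E_μ(T) = T^{2−μ} if 3/2 < μ < 2, E_μ(T) = log(1+T) if μ = 2, and E_μ(T) = 1 if μ > 2. -/
open MeasureTheory

noncomputable section

lemma aux_K (μ : ℝ) : ∃ K : ℝ, 0 < K ∧ ∀ T : ℝ, 1 ≤ T →
    (∫ β in (0:ℝ)..T, (1 + β) ^ (1 - μ)) ≤ K * (if μ = 2 then Real.log (1 + T)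
               else if μ < 2 then T ^ (2 - μ) else 1) ∧
    T ^ (2 - μ) ≤ K * (if μ = 2 then Real.log (1 + T)
               else if μ < 2 then T ^ (2 - μ) else 1) := by
  have hint : ∀ T : ℝ, 1 ≤ T → (∫ β in (0:ℝ)..T, (1 + β) ^ (1 - μ))
      = ∫ x in (1:ℝ)..(1+T), x ^ (1 - μ) := by
    intro T hT
    have := intervalIntegral.integral_comp_add_left (a := 0) (b := T)
      (fun x : ℝ => x ^ (1 - μ)) 1
    simpa using this
  have hz : ∀ T : ℝ, 1 ≤ T → (0:ℝ) ∉ Set.uIcc 1 (1+T) := by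
    intro T hT h
    rw [Set.uIcc_of_le (by linarith)] at h
    linarith [h.1]
  have hpow : μ ≠ 2 → ∀ T : ℝ, 1 ≤ T → (∫ β in (0:ℝ)..T, (1 + β) ^ (1 - μ))
      = ((1+T) ^ (2 - μ) - 1) / (2 - μ) := by
    intro h2 T hT
    rw [hint T hT, integral_rpow (Or.inr ⟨fun h => h2 (by linarith), hz T hT⟩)]
    rw [show 1 - μ + 1 = 2 - μ by ring, Real.one_rpow]
  rcases lt_trichotomy μ 2 with h | h | h
  · refine ⟨2 ^ (2 - μ) / (2 - μ) + 1, ?_, ?_⟩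
    · have : 0 < 2 - μ := by linarith
      positivity
    intro T hT
    have h0 : 0 < 2 - μ := by linarith
    rw [if_neg h.ne, if_pos h, hpow h.ne T hT]
    have hT0 : 0 < T ^ (2 - μ) := Real.rpow_pos_of_pos (by linarith) _
    have h1 : (1+T) ^ (2 - μ) ≤ 2 ^ (2 - μ) * T ^ (2 - μ) := by
      rw [← Real.mul_rpow (by norm_num) (by linarith)]
      exact Real.rpow_le_rpow (by linarith) (by linarith) h0.le
    have h3 : 0 ≤ (2:ℝ) ^ (2 - μ) / (2 - μ) := by positivity
    constructor
    · have : ((1+T) ^ (2 - μ) - 1) / (2 - μ) ≤ (2 ^ (2 - μ) * T ^ (2 - μ)) / (2 - μ) := by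
        gcongr; linarith
      calc _ ≤ _ := this
        _ = 2 ^ (2 - μ) / (2 - μ) * T ^ (2 - μ) := by ring
        _ ≤ _ := by nlinarith
    · nlinarith
  · subst h
    have hl : 0 < Real.log 2 := Real.log_pos (by norm_num)
    refine ⟨1 + 1 / Real.log 2, by positivity, ?_⟩
    intro T hT
    have hlT : Real.log 2 ≤ Real.log (1 + T) := Real.log_le_log (by norm_num) (by linarith)
    rw [if_pos rfl, hint T hT]
    constructor
    · have : ∫ x in (1:ℝ)..(1+T), x ^ ((1:ℝ) - 2) = Real.log (1 + T) := by
        have e : (1:ℝ) - 2 = -1 := by norm_num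
        simp only [e, Real.rpow_neg_one]
        rw [integral_inv (hz T hT), div_one]
      rw [this]
      have : 0 ≤ 1 / Real.log 2 * Real.log (1 + T) := by
        have := hl.trans_le hlT
        positivity
      linarith
    · have : 1 ≤ 1 / Real.log 2 * Real.log (1 + T) := by
        rw [one_div, inv_mul_eq_div, le_div_iff₀ hl]; linarith
      simp only [sub_self, Real.rpow_zero]
      linarith
  · have h0 : 0 < μ - 2 := by linarith
    refine ⟨1 / (μ - 2) + 1, by positivity, ?_⟩
    intro T hT
    rw [if_neg h.ne', if_neg (not_lt.2 h.le), hpow h.ne' T hT]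
    have hp : 0 < (1 + T) ^ (2 - μ) := Real.rpow_pos_of_pos (by linarith) _
    have h3 : 0 ≤ 1 / (μ - 2) := by positivity
    constructor
    · have : ((1+T) ^ (2 - μ) - 1) / (2 - μ) ≤ 1 / (μ - 2) := by
        rw [← neg_div_neg_eq, neg_sub, neg_sub]
        gcongr; linarith
      linarith
    · have := Real.rpow_le_one_of_one_le_of_nonpos hT (by linarith : 2 - μ ≤ 0)
      linarith

lemma aux_sqrt {T β : ℝ} (h : β ≤ T) : (Real.sqrt (T - β))⁻¹ = (T - β) ^ (-(1/2) : ℝ) := by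
  rw [Real.sqrt_eq_rpow, Real.rpow_neg (by linarith)]

lemma aux_ii (T : ℝ) :
    IntervalIntegrable (fun β : ℝ => (T - β) ^ (-(1/2) : ℝ)) volume 0 T := by
  have := (intervalIntegral.intervalIntegrable_rpow' (a := T) (b := 0)
    (r := (-(1/2) : ℝ)) (by norm_num)).comp_sub_left T
  simpa using this

lemma aux_int (T : ℝ) :
    ∫ β in (0:ℝ)..T, (T - β) ^ (-(1/2) : ℝ) = 2 * T ^ (1/2 : ℝ) := by
  have := intervalIntegral.integral_comp_sub_left (a := 0) (b := T)
      (fun x : ℝ => x ^ (-(1/2) : ℝ)) T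
  rw [this, integral_rpow (Or.inl (by norm_num))]
  norm_num
  ring

lemma aux_cont (T s : ℝ) (hT : 1 ≤ T) :
    ContinuousOn (fun β : ℝ => (1 + β) ^ s) (Set.uIcc 0 T) := by
  rw [Set.uIcc_of_le (by linarith)]
  apply ContinuousOn.rpow_const (by fun_prop)
  intro x hx
  left
  linarith [hx.1]

lemma aux_pt_s18 (μ : ℝ) (hμ : 3/2 < μ) (T β : ℝ) (hT : 1 ≤ T) (h0 : 0 ≤ β) (h1 : β ≤ T) :
    β * (T - β) ^ (-(1/2) : ℝ) * (1 + β) ^ (-μ) ≤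
      2 ^ (1/2 : ℝ) * T ^ (-(1/2) : ℝ) * (1 + β) ^ (1 - μ)
       + (T/2) ^ (1 - μ) * (T - β) ^ (-(1/2) : ℝ) := by
  have hp : 0 ≤ (T - β) ^ (-(1/2) : ℝ) := Real.rpow_nonneg (by linarith) _
  have hq : 0 ≤ (1 + β) ^ (1 - μ) := Real.rpow_nonneg (by linarith) _
  have hb : β * (1 + β) ^ (-μ) ≤ (1 + β) ^ (1 - μ) := by
    rw [show 1 - μ = 1 + -μ by ring, Real.rpow_add (by linarith), Real.rpow_one]
    gcongr
    linarith
  have hb' : β * (T - β) ^ (-(1/2) : ℝ) * (1 + β) ^ (-μ) ≤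
      (T - β) ^ (-(1/2) : ℝ) * (1 + β) ^ (1 - μ) := by
    nlinarith [mul_le_mul_of_nonneg_left hb hp]
  refine hb'.trans ?_
  rcases le_total β (T/2) with h | h
  · have : (T - β) ^ (-(1/2) : ℝ) ≤ 2 ^ (1/2 : ℝ) * T ^ (-(1/2) : ℝ) := by
      have e : (2:ℝ) ^ (1/2 : ℝ) * T ^ (-(1/2) : ℝ) = (T/2) ^ (-(1/2) : ℝ) := by
        rw [Real.div_rpow (by linarith) (by norm_num), Real.rpow_neg (by norm_num : (0:ℝ) ≤ 2)]
        rw [div_inv_eq_mul, mul_comm]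
      rw [e]
      exact Real.rpow_le_rpow_of_nonpos (by linarith) (by linarith) (by norm_num)
    have h3 : 0 ≤ (T/2) ^ (1 - μ) := Real.rpow_nonneg (by linarith) _
    nlinarith [mul_le_mul_of_nonneg_right this hq, mul_nonneg h3 hp]
  · have : (1 + β) ^ (1 - μ) ≤ (T/2) ^ (1 - μ) :=
      Real.rpow_le_rpow_of_nonpos (by linarith) (by linarith) (by linarith)
    have h3 : 0 ≤ (2:ℝ) ^ (1/2 : ℝ) * T ^ (-(1/2) : ℝ) := by positivity
    nlinarith [mul_le_mul_of_nonneg_right this hp, mul_nonneg h3 hq]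

/-- One-dimensional integral estimate for the 'first factor' in the bound of the piece
`I₁` in the proof of the L∞–L∞ estimate for the 2+1-dimensional wave equation. -/
theorem stmt18 (μ : ℝ) (hμ : 3/2 < μ) :
    ∃ C : ℝ, 0 < C ∧
      ∀ T : ℝ, 1 ≤ T →
        ∫ β in (0:ℝ)..T, β * (Real.sqrt (T - β))⁻¹ * (1 + β) ^ (-μ)
          ≤ C * T ^ (-(1/2) : ℝ) *
              (if μ = 2 then Real.log (1 + T)
               else if μ < 2 then T ^ (2 - μ) else 1) := by
  obtain ⟨K, hK, hKT⟩ := aux_K μ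
  refine ⟨2 ^ (1/2 : ℝ) * K + 2 * 2 ^ (μ - 1) * K, by positivity, ?_⟩
  intro T hT
  obtain ⟨hA, hB⟩ := hKT T hT
  generalize (if μ = 2 then Real.log (1 + T)
               else if μ < 2 then T ^ (2 - μ) else 1) = E at hA hB ⊢
  have hT0 : (0:ℝ) ≤ T := by linarith
  have e1 : ∫ β in (0:ℝ)..T, β * (Real.sqrt (T - β))⁻¹ * (1 + β) ^ (-μ)
      = ∫ β in (0:ℝ)..T, β * (T - β) ^ (-(1/2) : ℝ) * (1 + β) ^ (-μ) := by
    apply intervalIntegral.integral_congr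
    intro β hβ
    rw [Set.uIcc_of_le hT0] at hβ
    simp only [aux_sqrt hβ.2]
  have i1 : IntervalIntegrable (fun β : ℝ => β * (T - β) ^ (-(1/2) : ℝ) * (1 + β) ^ (-μ))
      volume 0 T :=
    ((aux_ii T).continuousOn_mul continuousOn_id).mul_continuousOn (aux_cont T _ hT)
  have i2 : IntervalIntegrable
      (fun β : ℝ => 2 ^ (1/2 : ℝ) * T ^ (-(1/2) : ℝ) * (1 + β) ^ (1 - μ)) volume 0 T :=
    (aux_cont T _ hT).intervalIntegrable.const_mul _
  have i3 : IntervalIntegrable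
      (fun β : ℝ => (T/2) ^ (1 - μ) * (T - β) ^ (-(1/2) : ℝ)) volume 0 T :=
    (aux_ii T).const_mul _
  have hm := intervalIntegral.integral_mono_on hT0 i1 (i2.add i3)
    (fun β hβ => aux_pt_s18 μ hμ T β hT hβ.1 hβ.2)
  rw [intervalIntegral.integral_add i2 i3, intervalIntegral.integral_const_mul,
    intervalIntegral.integral_const_mul, aux_int] at hm
  rw [e1]
  refine hm.trans ?_
  have hTp : 0 < T := by linarith
  have e2 : (T/2) ^ (1 - μ) * (2 * T ^ (1/2 : ℝ))
      = 2 * 2 ^ (μ - 1) * T ^ (-(1/2) : ℝ) * T ^ (2 - μ) := by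
    rw [Real.div_rpow hT0 (by norm_num), show μ - 1 = -(1 - μ) by ring,
      Real.rpow_neg (by norm_num : (0:ℝ) ≤ 2)]
    have : T ^ (1 - μ) * T ^ (1/2 : ℝ) = T ^ (-(1/2) : ℝ) * T ^ (2 - μ) := by
      rw [← Real.rpow_add hTp, ← Real.rpow_add hTp]; congr 1; ring
    rw [mul_assoc, ← this]
    ring
  rw [e2]
  have p1 : 0 ≤ (2:ℝ) ^ (1/2 : ℝ) * T ^ (-(1/2) : ℝ) := by positivity
  have p2 : 0 ≤ 2 * (2:ℝ) ^ (μ - 1) * T ^ (-(1/2) : ℝ) := by positivity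
  have q1 := mul_le_mul_of_nonneg_left hA p1
  have q2 := mul_le_mul_of_nonneg_left hB p2
  refine (add_le_add q1 q2).trans (le_of_eq ?_)
  ring
end
end

section
/- Let μ > 3/2. Then there is a constant C = C(μ) such that for every T ≥ 1: ∫₀^∞ β (β+T)^{−1/2} (1+β)^{−μ} dβ ≤ C T^{−1/2} E_μ(T), where E_μ(T) = T^{2−μ} if 3/2 < μ < 2, E_μ(T) = log(1+T) if μ = 2, and E_μ(T) = 1 if μ > 2; in particular the integral converges since μ > 3/2. -/
open MeasureTheory

noncomputable section

/-- The splitting at `β = T`. -/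
theorem stmt19_aux (μ : ℝ) (hμ : 3/2 < μ) (T : ℝ) (hT : 1 ≤ T) :
    IntegrableOn (fun β : ℝ => β * (Real.sqrt (β + T))⁻¹ * (1 + β) ^ (-μ)) (Set.Ioi 0) ∧
    ∫ β in Set.Ioi (0:ℝ), β * (Real.sqrt (β + T))⁻¹ * (1 + β) ^ (-μ)
      ≤ T ^ (-(1/2) : ℝ) * ((∫ β in (0:ℝ)..T, (1 + β) ^ (1 - μ))
          + T ^ (2 - μ) / (μ - 3/2)) := by
  have hT0 : 0 < T := by linarith
  set f : ℝ → ℝ := fun β : ℝ => β * (Real.sqrt (β + T))⁻¹ * (1 + β) ^ (-μ) with hf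
  have hcont : ContinuousOn f (Set.Ici 0) := by
    intro x hx
    have hx : 0 ≤ x := hx
    apply ContinuousAt.continuousWithinAt
    have h1 : Real.sqrt (x + T) ≠ 0 := (Real.sqrt_pos.2 (by linarith)).ne'
    have h2 : 1 + x ≠ 0 := by linarith
    have c1 : ContinuousAt (fun β : ℝ => (Real.sqrt (β + T))⁻¹) x :=
      ContinuousAt.inv₀ (by fun_prop) h1
    have c2 : ContinuousAt (fun β : ℝ => (1 + β) ^ (-μ)) x :=
      ContinuousAt.rpow_const (by fun_prop) (Or.inl h2)
    exact (continuousAt_id.mul c1).mul c2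
  have hcont2 : ContinuousOn (fun β : ℝ => (1 + β) ^ (1 - μ)) (Set.Icc 0 T) := by
    intro x hx
    have h2 : 1 + x ≠ 0 := by linarith [hx.1]
    exact (ContinuousAt.rpow_const (by fun_prop) (Or.inl h2)).continuousWithinAt
  have hi1 : IntegrableOn f (Set.Ioc 0 T) :=
    ((hcont.mono Set.Icc_subset_Ici_self).integrableOn_Icc).mono_set Set.Ioc_subset_Icc_self
  have hg1 : IntegrableOn (fun β : ℝ => T ^ (-(1/2) : ℝ) * (1 + β) ^ (1 - μ)) (Set.Ioc 0 T) :=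
    (hcont2.integrableOn_Icc.mono_set Set.Ioc_subset_Icc_self).const_mul _
  have hg2 : IntegrableOn (fun β : ℝ => β ^ (1/2 - μ)) (Set.Ioi T) :=
    integrableOn_Ioi_rpow_of_lt (by linarith) hT0
  have hsq : ∀ y : ℝ, 0 < y → (Real.sqrt y)⁻¹ = y ^ (-(1/2) : ℝ) := by
    intro y hy
    rw [Real.sqrt_eq_rpow, Real.rpow_neg hy.le]
  have hnn : ∀ β : ℝ, 0 < β → 0 ≤ f β := by
    intro β hβ
    simp only [hf]
    positivity
  have hb1 : ∀ β ∈ Set.Ioc 0 T, f β ≤ T ^ (-(1/2) : ℝ) * (1 + β) ^ (1 - μ) := by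
    intro β hβ
    have h0 : 0 < β := hβ.1
    have e : (1 + β) ^ (1 - μ) = (1 + β) * (1 + β) ^ (-μ) := by
      rw [sub_eq_add_neg, Real.rpow_add (by linarith), Real.rpow_one]
    rw [e, ← hsq T hT0]
    have s1 : (Real.sqrt (β + T))⁻¹ ≤ (Real.sqrt T)⁻¹ :=
      inv_anti₀ (Real.sqrt_pos.2 hT0) (Real.sqrt_le_sqrt (by linarith))
    calc f β ≤ (1 + β) * (Real.sqrt T)⁻¹ * (1 + β) ^ (-μ) := by
          simp only [hf]
          gcongr
          linarith
      _ = _ := by ring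
  have hb2 : ∀ β ∈ Set.Ioi T, f β ≤ β ^ (1/2 - μ) := by
    intro β hβ
    have hβT : T < β := hβ
    have h0 : 0 < β := by linarith
    have e : β ^ (1/2 - μ) = β * (Real.sqrt β)⁻¹ * β ^ (-μ) := by
      rw [hsq β h0]
      nth_rewrite 2 [← Real.rpow_one β]
      rw [← Real.rpow_add h0, ← Real.rpow_add h0]
      congr 1
      ring
    have s1 : (Real.sqrt (β + T))⁻¹ ≤ (Real.sqrt β)⁻¹ :=
      inv_anti₀ (Real.sqrt_pos.2 h0) (Real.sqrt_le_sqrt (by linarith))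
    have s2 : (1 + β) ^ (-μ) ≤ β ^ (-μ) :=
      Real.rpow_le_rpow_of_nonpos h0 (by linarith) (by linarith)
    rw [e]
    simp only [hf]
    gcongr
  have hi2 : IntegrableOn f (Set.Ioi T) := by
    refine Integrable.mono' hg2 ?_ ?_
    · exact (hcont.mono (fun x hx => (hT0.trans hx).le)).aestronglyMeasurable measurableSet_Ioi
    · refine (ae_restrict_iff' measurableSet_Ioi).2 (Filter.Eventually.of_forall ?_)
      intro β hβ
      rw [Real.norm_of_nonneg (hnn β (hT0.trans hβ))]
      exact hb2 β hβ
  have hU : Set.Ioc 0 T ∪ Set.Ioi T = Set.Ioi (0:ℝ) := Set.Ioc_union_Ioi_eq_Ioi hT0.le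
  refine ⟨hU ▸ hi1.union hi2, ?_⟩
  rw [← hU, setIntegral_union (Set.Ioc_disjoint_Ioi le_rfl) measurableSet_Ioi hi1 hi2]
  have k1 := setIntegral_mono_on hi1 hg1 measurableSet_Ioc hb1
  have k2 := setIntegral_mono_on hi2 hg2 measurableSet_Ioi hb2
  rw [integral_Ioi_rpow_of_lt (by linarith) hT0] at k2
  rw [integral_const_mul] at k1
  have e : -T ^ (1/2 - μ + 1) / (1/2 - μ + 1) =
      T ^ (-(1/2) : ℝ) * (T ^ (2 - μ) / (μ - 3/2)) := by
    have h3 : T ^ (1/2 - μ + 1) = T ^ (-(1/2) : ℝ) * T ^ (2 - μ) := by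
      rw [← Real.rpow_add hT0]
      congr 1
      ring
    rw [h3, show 1/2 - μ + 1 = -(μ - 3/2) by ring, neg_div_neg_eq, mul_div_assoc]
  rw [e] at k2
  rw [mul_add, intervalIntegral.integral_of_le hT0.le]
  exact add_le_add k1 k2

theorem stmt19_J (μ : ℝ) (T : ℝ) (hT : 1 ≤ T) (h2 : μ ≠ 2) :
    ∫ β in (0:ℝ)..T, (1 + β) ^ (1 - μ) = ((1 + T) ^ (2 - μ) - 1) / (2 - μ) := by
  rw [intervalIntegral.integral_comp_add_left (fun x : ℝ => x ^ (1 - μ)) 1, integral_rpow]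
  · rw [show 1 - μ + 1 = 2 - μ by ring]
    simp
  · right
    refine ⟨fun h => h2 (by linarith), ?_⟩
    rw [Set.uIcc_of_le (by linarith)]
    intro h
    linarith [h.1]

theorem stmt19_J2 (T : ℝ) (hT : 1 ≤ T) :
    ∫ β in (0:ℝ)..T, (1 + β) ^ (1 - 2 : ℝ) = Real.log (1 + T) := by
  rw [intervalIntegral.integral_comp_add_left (fun x : ℝ => x ^ (1 - 2 : ℝ)) 1]
  rw [show (1 - 2 : ℝ) = -1 by norm_num]
  simp only [Real.rpow_neg_one]
  rw [integral_inv_of_pos (by norm_num) (by linarith)]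
  simp

/-- One-dimensional integral estimate for the 'first factor' in the bound of the piece
`I₂` in the proof of the L∞–L∞ estimate for the 2+1-dimensional wave equation. -/
theorem stmt19 (μ : ℝ) (hμ : 3/2 < μ) :
    ∃ C : ℝ, 0 < C ∧
      ∀ T : ℝ, 1 ≤ T →
        IntegrableOn (fun β : ℝ => β * (Real.sqrt (β + T))⁻¹ * (1 + β) ^ (-μ))
          (Set.Ioi 0) ∧
        ∫ β in Set.Ioi (0:ℝ), β * (Real.sqrt (β + T))⁻¹ * (1 + β) ^ (-μ)
          ≤ C * T ^ (-(1/2) : ℝ) *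
              (if μ = 2 then Real.log (1 + T)
               else if μ < 2 then T ^ (2 - μ) else 1) := by
  have hm : 0 < μ - 3/2 := by linarith
  suffices h : ∃ C : ℝ, 0 < C ∧ ∀ T : ℝ, 1 ≤ T →
      (∫ β in (0:ℝ)..T, (1 + β) ^ (1 - μ)) + T ^ (2 - μ) / (μ - 3/2) ≤
        C * (if μ = 2 then Real.log (1 + T)
               else if μ < 2 then T ^ (2 - μ) else 1) by
    obtain ⟨C, hC, h⟩ := h
    refine ⟨C, hC, fun T hT => ?_⟩
    obtain ⟨a, b⟩ := stmt19_aux μ hμ T hT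
    refine ⟨a, b.trans ?_⟩
    rw [mul_comm C, mul_assoc]
    exact mul_le_mul_of_nonneg_left (h T hT) (Real.rpow_nonneg (by linarith) _)
  rcases lt_trichotomy μ 2 with h | h | h
  · have hd : 0 < 2 - μ := by linarith
    refine ⟨2 ^ (2 - μ) / (2 - μ) + 1 / (μ - 3/2), by positivity, fun T hT => ?_⟩
    rw [if_neg h.ne, if_pos h, stmt19_J μ T hT h.ne, add_mul]
    have h1 : (1 + T) ^ (2 - μ) ≤ 2 ^ (2 - μ) * T ^ (2 - μ) := by
      rw [← Real.mul_rpow (by norm_num) (by linarith)]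
      exact Real.rpow_le_rpow (by linarith) (by linarith) hd.le
    refine add_le_add ?_ (le_of_eq (by ring))
    rw [div_mul_eq_mul_div]
    exact div_le_div_of_nonneg_right (by linarith) hd.le
  · subst h
    have hl : 0 < Real.log 2 := Real.log_pos (by norm_num)
    refine ⟨1 + 2 / Real.log 2, by positivity, fun T hT => ?_⟩
    rw [if_pos rfl, stmt19_J2 T hT, sub_self, Real.rpow_zero, add_mul, one_mul]
    have h1 : Real.log 2 ≤ Real.log (1 + T) := Real.log_le_log (by norm_num) (by linarith)
    have h2 : 2 ≤ 2 / Real.log 2 * Real.log (1 + T) := by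
      rw [div_mul_eq_mul_div, le_div_iff₀ hl]
      linarith
    norm_num
    linarith
  · have hd : 0 < μ - 2 := by linarith
    refine ⟨1 / (μ - 2) + 1 / (μ - 3/2), by positivity, fun T hT => ?_⟩
    rw [if_neg h.ne', if_neg h.le.not_gt, stmt19_J μ T hT h.ne', mul_one]
    have h1 : T ^ (2 - μ) ≤ 1 := Real.rpow_le_one_of_one_le_of_nonpos hT (by linarith)
    have h2 : 0 ≤ (1 + T) ^ (2 - μ) := Real.rpow_nonneg (by linarith) _
    refine add_le_add ?_ (div_le_div_of_nonneg_right h1 hm.le)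
    rw [show ((1 + T) ^ (2 - μ) - 1) / (2 - μ) = (1 - (1 + T) ^ (2 - μ)) / (μ - 2) by
      rw [← neg_div_neg_eq]; congr 1 <;> ring]
    exact div_le_div_of_nonneg_right (by linarith) hd.le
end
end
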